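/- arXiv:2110.12092 — 9 statements merged into one kernel-verified Lean document; each statement's English description precedes it below -/
import Mathlib

section
/- Let E be a separable Banach space and E_1, …, E_N closed subspaces of E such that E is the (internal, topological) direct sum E = E_1 ⊕ … ⊕ E_N. If E has a besselian Schauder frame, then for each j ∈ {1, …, N} the Banach space E_j has a besselian Schauder frame. -/
open Filter Topology

/-- `((a n, b n))` is a Schauder frame of `X`: the partial sums `∑_{j<n} b j x • a j`
converge in norm to `x` for every `x ∈ X`. -/
def IsSchauderFrame {X : Type*} [NormedAddCommGroup X] [NormedSpace ℝ X]
    (a : ℕ → X) (b : ℕ → X →L[ℝ] ℝ) : Prop :=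
  ∀ x : X, Tendsto (fun n => ∑ j ∈ Finset.range n, b j x • a j) atTop (𝓝 x)

/-- `((a n, b n))` is a besselian pair of `X`: there is `A > 0` such that
`∑ |b n x| |y (a n)| ≤ A ‖x‖ ‖y‖` for all `x ∈ X`, `y ∈ X*`. -/
def IsBesselianPair {X : Type*} [NormedAddCommGroup X] [NormedSpace ℝ X]
    (a : ℕ → X) (b : ℕ → X →L[ℝ] ℝ) : Prop :=
  ∃ A > (0 : ℝ), ∀ (x : X) (y : X →L[ℝ] ℝ),
    Summable (fun n => |b n x| * |y (a n)|) ∧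
    ∑' n, |b n x| * |y (a n)| ≤ A * ‖x‖ * ‖y‖

/-- A besselian Schauder frame is a pair which is both a Schauder frame and a
besselian pair. -/
def IsBesselianSchauderFrame {X : Type*} [NormedAddCommGroup X] [NormedSpace ℝ X]
    (a : ℕ → X) (b : ℕ → X →L[ℝ] ℝ) : Prop :=
  IsSchauderFrame a b ∧ IsBesselianPair a b

/-- If a separable Banach space `E` is the topological direct sum of closed subspaces
`E₁, …, E_N` and `E` has a besselian Schauder frame, then each `E_j` has a besselian
Schauder frame. -/
theorem besselianSchauderFrame_of_directSum_summand
    {E : Type*} [NormedAddCommGroup E] [NormedSpace ℝ E] [CompleteSpace E]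
    [TopologicalSpace.SeparableSpace E]
    (N : ℕ) (F : Fin N → Submodule ℝ E)
    (hclosed : ∀ j, IsClosed (F j : Set E))
    (hdirect : ∀ x : E, ∃! c : Fin N → E, (∀ j, c j ∈ F j) ∧ ∑ j, c j = x)
    (hframe : ∃ (a : ℕ → E) (b : ℕ → E →L[ℝ] ℝ), IsBesselianSchauderFrame a b) :
    ∀ j, ∃ (a : ℕ → F j) (b : ℕ → (F j) →L[ℝ] ℝ), IsBesselianSchauderFrame a b := by
  intro j
  obtain ⟨a, b, hS, A, hA, hB⟩ := hframe
  haveI : ∀ i, CompleteSpace (F i) := fun i => (hclosed i).completeSpace_coe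
  let S : (∀ i, F i) →L[ℝ] E :=
    ∑ i, (F i).subtypeL.comp (ContinuousLinearMap.proj (R := ℝ) (φ := fun i => F i) i)
  have hSapp : ∀ c, S c = ∑ i, (c i : E) := by
    intro c
    simp [S]
  have hinj : Function.Injective S := by
    intro c d hcd
    obtain ⟨e, -, he⟩ := hdirect (S c)
    have h1 := he (fun i => (c i : E)) ⟨fun i => (c i).2, (hSapp c).symm⟩
    have h2 := he (fun i => (d i : E)) ⟨fun i => (d i).2, by rw [hcd]; exact (hSapp d).symm⟩
    funext i
    exact Subtype.ext (congrFun (h1.trans h2.symm) i)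
  have hsurj : Function.Surjective S := by
    intro x
    obtain ⟨e, ⟨he, hx⟩, -⟩ := hdirect x
    exact ⟨fun i => ⟨e i, he i⟩, by rw [hSapp]; exact hx⟩
  let T := ContinuousLinearEquiv.ofBijective S (LinearMap.ker_eq_bot.2 hinj)
    (LinearMap.range_eq_top.2 hsurj)
  let P : E →L[ℝ] F j := (ContinuousLinearMap.proj (R := ℝ) (φ := fun i => F i) j).comp
    (T.symm : E →L[ℝ] (∀ i, F i))
  have hP : ∀ x : F j, P x = x := by
    intro x
    have h : T (Pi.single j x) = (x : E) := by
      change S _ = _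
      rw [hSapp, Finset.sum_eq_single j]
      · simp
      · intro i _ hi
        simp [Pi.single_eq_of_ne hi]
      · simp
    have h2 : T.symm (x : E) = Pi.single j x := by
      rw [← h, T.symm_apply_apply]
    change T.symm (x : E) j = x
    rw [h2, Pi.single_eq_same]
  refine ⟨fun n => P (a n), fun n => (b n).comp (F j).subtypeL, ?_, A * (‖P‖ + 1),
    by positivity, ?_⟩
  · intro x
    have h := (P.continuous.tendsto (x : E)).comp (hS x)
    rw [hP] at h
    refine h.congr fun n => ?_
    simp
  · intro x y
    obtain ⟨h1, h2⟩ := hB x (y.comp P)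
    refine ⟨h1, h2.trans ?_⟩
    have h3 : ‖y.comp P‖ ≤ ‖y‖ * (‖P‖ + 1) :=
      (y.opNorm_comp_le P).trans (by gcongr; linarith)
    calc A * ‖(x : E)‖ * ‖y.comp P‖ ≤ A * ‖(x : E)‖ * (‖y‖ * (‖P‖ + 1)) := by gcongr
      _ = A * (‖P‖ + 1) * ‖x‖ * ‖y‖ := by rw [Submodule.coe_norm]; ring
end

section
/- Let E be a separable Banach space and E_1, …, E_N closed subspaces of E such that E is the (internal, topological) direct sum E = E_1 ⊕ … ⊕ E_N. If for each j ∈ {1, …, N} the Banach space E_j has a Schauder frame, then E has a Schauder frame. -/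
open Filter Topology

lemma interleave_sum {X : Type*} [AddCommMonoid X] (N r : ℕ) (hr : r < N) (f : ℕ → X) (n : ℕ) :
    ∑ j ∈ Finset.range n, (if j % N = r then f (j / N) else 0)
      = ∑ q ∈ Finset.range ((n + (N - 1 - r)) / N), f q := by
  have hN : 0 < N := by omega
  induction n with
  | zero =>
    have : (0 + (N - 1 - r)) / N = 0 := Nat.div_eq_of_lt (by omega)
    rw [this]; simp
  | succ n ih =>
    rw [Finset.sum_range_succ, ih]
    have hd := Nat.div_add_mod n N
    have hs := Nat.mod_lt n hN
    generalize hq : n / N = q at *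
    generalize hs' : n % N = s at *
    split_ifs with h
    · subst h
      have h1 : (n + (N - 1 - s)) / N = q := by
        rw [Nat.div_eq_iff hN]; rw [mul_comm q N]; omega
      have h2 : (n + 1 + (N - 1 - s)) / N = q + 1 := by
        rw [Nat.div_eq_iff hN]; rw [mul_comm _ N, Nat.mul_add]; omega
      rw [h1, h2, Finset.sum_range_succ]
    · rw [add_zero]
      congr 2
      rcases lt_or_gt_of_ne h with h | h
      · have h1 : (n + (N - 1 - r)) / N = q := by
          rw [Nat.div_eq_iff hN]; rw [mul_comm q N]; omega
        have h2 : (n + 1 + (N - 1 - r)) / N = q := by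
          rw [Nat.div_eq_iff hN]; rw [mul_comm q N]; omega
        rw [h1, h2]
      · have h1 : (n + (N - 1 - r)) / N = q + 1 := by
          rw [Nat.div_eq_iff hN]; rw [mul_comm _ N, Nat.mul_add]; omega
        have h2 : (n + 1 + (N - 1 - r)) / N = q + 1 := by
          rw [Nat.div_eq_iff hN]; rw [mul_comm _ N, Nat.mul_add]; omega
        rw [h1, h2]

/-- If a separable Banach space `E` is the topological direct sum of closed subspaces
`E₁, …, E_N` each of which has a Schauder frame, then `E` has a Schauder frame. -/
theorem schauderFrame_of_directSum
    {E : Type*} [NormedAddCommGroup E] [NormedSpace ℝ E] [CompleteSpace E]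
    [TopologicalSpace.SeparableSpace E]
    (N : ℕ) (F : Fin N → Submodule ℝ E)
    (hclosed : ∀ j, IsClosed (F j : Set E))
    (hdirect : ∀ x : E, ∃! c : Fin N → E, (∀ j, c j ∈ F j) ∧ ∑ j, c j = x)
    (hframes : ∀ j, ∃ (a : ℕ → F j) (b : ℕ → (F j) →L[ℝ] ℝ), IsSchauderFrame a b) :
    ∃ (a : ℕ → E) (b : ℕ → E →L[ℝ] ℝ), IsSchauderFrame a b := by
  rcases Nat.eq_zero_or_pos N with hN | hN
  · subst hN
    refine ⟨0, 0, fun x => ?_⟩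
    obtain ⟨c, ⟨_, hc⟩, _⟩ := hdirect x
    have hx : x = 0 := by rw [← hc]; simp
    subst hx
    simp
  choose a b hab using hframes
  haveI : ∀ j, CompleteSpace (F j) := fun j => (hclosed j).completeSpace_coe
  let T : (∀ j, F j) →L[ℝ] E :=
    ∑ j, (F j).subtypeL ∘L (ContinuousLinearMap.proj (R := ℝ) (φ := fun j => F j) j)
  have hT : ∀ v, T v = ∑ j, (v j : E) := fun v => by
    simp [T]
  have hinj : Function.Injective T := by
    intro v w hvw
    obtain ⟨c, _, hc⟩ := hdirect (T v)
    have h1 := hc (fun j => (v j : E)) ⟨fun j => (v j).2, (hT v).symm⟩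
    have h2 := hc (fun j => (w j : E)) ⟨fun j => (w j).2, by rw [hvw, hT]⟩
    funext j
    exact Subtype.ext (congrFun (h1.trans h2.symm) j)
  have hsurj : Function.Surjective T := by
    intro x
    obtain ⟨c, ⟨hc, hx⟩, _⟩ := hdirect x
    exact ⟨fun j => ⟨c j, hc j⟩, by rw [hT]; exact hx⟩
  let e : (∀ j, F j) ≃L[ℝ] E := ContinuousLinearEquiv.ofBijective T
    (LinearMap.ker_eq_bot.2 hinj) (LinearMap.range_eq_top.2 hsurj)
  have he : ∀ v, e v = ∑ j, (v j : E) := hT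
  let ρ : ℕ → Fin N := fun n => ⟨n % N, Nat.mod_lt n hN⟩
  refine ⟨fun n => (a (ρ n) (n / N) : E), fun n => b (ρ n) (n / N) ∘L
    (ContinuousLinearMap.proj (R := ℝ) (φ := fun j => F j) (ρ n)) ∘L
      (e.symm : E →L[ℝ] (∀ j, F j)), fun x => ?_⟩
  have key : ∀ n, ∑ j ∈ Finset.range n, (b (ρ j) (j / N) (e.symm x (ρ j))) •
      (a (ρ j) (j / N) : E) = ∑ r : Fin N, ((∑ q ∈ Finset.range ((n + (N - 1 - r)) / N),
        b r q (e.symm x r) • a r q : F r) : E) := by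
    intro n
    have h : ∀ r : Fin N, ((∑ q ∈ Finset.range ((n + (N - 1 - r)) / N),
        b r q (e.symm x r) • a r q : F r) : E) = ∑ j ∈ Finset.range n,
          (if j % N = r then b r (j / N) (e.symm x r) • (a r (j / N) : E) else 0) := by
      intro r
      rw [interleave_sum N r r.2 (fun q => b r q (e.symm x r) • (a r q : E))]
      simp
    simp_rw [h]
    rw [Finset.sum_comm]
    refine Finset.sum_congr rfl fun j _ => ?_
    rw [Finset.sum_eq_single (ρ j)]
    · simp [ρ]
    · intro r _ hr
      rw [if_neg]
      intro h
      exact hr (Fin.ext h.symm)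
    · simp
  have hx : x = ∑ r, (e.symm x r : E) := by rw [← he]; simp
  change Tendsto (fun n => ∑ j ∈ Finset.range n, (b (ρ j) (j / N) (e.symm x (ρ j))) •
      (a (ρ j) (j / N) : E)) atTop (𝓝 x)
  simp_rw [key]
  conv => rhs; rw [hx]
  refine tendsto_finsetSum _ fun r _ => ?_
  have ht : Tendsto (fun n : ℕ => (n + (N - 1 - (r : ℕ))) / N) atTop atTop :=
    (Nat.tendsto_div_const_atTop hN.ne').comp (tendsto_add_atTop_nat _)
  exact (continuous_subtype_val.tendsto _).comp ((hab r (e.symm x r)).comp ht)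
end

section
/- Let E be a separable Banach space and E_1, …, E_N closed subspaces of E such that E is the (internal, topological) direct sum E = E_1 ⊕ … ⊕ E_N. If for each j ∈ {1, …, N} the Banach space E_j has a besselian Schauder frame, then E has a besselian Schauder frame. -/
open Filter Topology

/-- Operator `P` is represented by a besselian series. -/
def RepBy {E : Type*} [NormedAddCommGroup E] [NormedSpace ℝ E] (P : E → E) : Prop :=
  ∃ (a : ℕ → E) (b : ℕ → E →L[ℝ] ℝ),
    (∀ x : E, Tendsto (fun n => ∑ j ∈ Finset.range n, b j x • a j) atTop (𝓝 (P x))) ∧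
    IsBesselianPair a b

theorem RepBy.zero {E : Type*} [NormedAddCommGroup E] [NormedSpace ℝ E] :
    RepBy (fun _ : E => (0 : E)) := by
  refine ⟨fun _ => 0, fun _ => 0, fun x => by simp, 1, one_pos, fun x y => ?_⟩
  simp
  positivity

theorem sum_interleave {E : Type*} [AddCommGroup E] (f g h : ℕ → E)
    (he : ∀ n, h (2 * n) = f n) (ho : ∀ n, h (2 * n + 1) = g n) (n : ℕ) :
    ∑ j ∈ Finset.range n, h j =
      ∑ j ∈ Finset.range ((n + 1) / 2), f j + ∑ j ∈ Finset.range (n / 2), g j := by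
  induction n with
  | zero => simp
  | succ n ih =>
    rw [Finset.sum_range_succ, ih]
    rcases Nat.even_or_odd' n with ⟨k, rfl | rfl⟩
    · rw [he, show (2 * k + 1 + 1) / 2 = k + 1 by omega, show (2 * k + 1) / 2 = k by omega,
        show (2 * k) / 2 = k by omega, Finset.sum_range_succ]
      abel
    · rw [ho, show (2 * k + 1 + 1 + 1) / 2 = k + 1 by omega,
        show (2 * k + 1 + 1) / 2 = k + 1 by omega,
        show (2 * k + 1) / 2 = k by omega, Finset.sum_range_succ (fun j => g j)]
      abel

theorem RepBy.add {E : Type*} [NormedAddCommGroup E] [NormedSpace ℝ E] {P Q : E → E}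
    (hP : RepBy P) (hQ : RepBy Q) : RepBy (fun x => P x + Q x) := by
  obtain ⟨a, b, h, A, hA, hB⟩ := hP
  obtain ⟨a', b', h', A', hA', hB'⟩ := hQ
  let c : ℕ → E := fun n => if n % 2 = 0 then a (n / 2) else a' (n / 2)
  let d : ℕ → E →L[ℝ] ℝ := fun n => if n % 2 = 0 then b (n / 2) else b' (n / 2)
  have ce : ∀ n, c (2 * n) = a n := fun n => by simp [c]
  have de : ∀ n, d (2 * n) = b n := fun n => by simp [d]
  have e : ∀ n, (2 * n + 1) / 2 = n := fun n => by omega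
  have co : ∀ n, c (2 * n + 1) = a' n := fun n => by simp [c, e]
  have dd : ∀ n, d (2 * n + 1) = b' n := fun n => by simp [d, e]
  refine ⟨c, d, fun x => ?_, A + A', by positivity, fun x y => ?_⟩
  · have := fun n => sum_interleave (fun j => b j x • a j) (fun j => b' j x • a' j)
      (fun j => d j x • c j) (fun n => by simp only [ce, de]) (fun n => by simp only [co, dd]) n
    simp only [this]
    have t0 : Tendsto (fun n : ℕ => n / 2) atTop atTop :=
      Nat.tendsto_div_const_atTop (by norm_num)
    exact ((h x).comp (t0.comp (tendsto_add_atTop_nat 1))).add ((h' x).comp t0)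
  · have hs : HasSum (fun n => |d n x| * |y (c n)|) _ := HasSum.even_add_odd
      (by simpa only [ce, de] using (hB x y).1.hasSum)
      (by simpa only [co, dd] using (hB' x y).1.hasSum)
    refine ⟨hs.summable, ?_⟩
    rw [hs.tsum_eq]
    have := (hB x y).2
    have := (hB' x y).2
    linarith

theorem RepBy.sum {E ι : Type*} [NormedAddCommGroup E] [NormedSpace ℝ E] (P : ι → E → E)
    (s : Finset ι) (hP : ∀ i, RepBy (P i)) : RepBy (fun x => ∑ i ∈ s, P i x) := by
  classical
  induction s using Finset.induction_on with
  | empty => simpa using RepBy.zero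
  | insert i s hi ih => simpa [Finset.sum_insert hi] using (hP i).add ih

theorem RepBy.of_frame {E : Type*} [NormedAddCommGroup E] [NormedSpace ℝ E]
    (F : Submodule ℝ E) (p : E →L[ℝ] F) (a : ℕ → F) (b : ℕ → F →L[ℝ] ℝ)
    (h : IsBesselianSchauderFrame a b) : RepBy (fun x => (p x : E)) := by
  obtain ⟨h, A, hA, hB⟩ := h
  refine ⟨fun n => a n, fun n => (b n).comp p, fun x => ?_, A * (‖p‖ + 1), by positivity,
    fun x y => ?_⟩
  · have := (F.subtypeL.continuous.tendsto _).comp (h (p x))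
    simpa [Function.comp_def] using this
  · have := hB (p x) (y.comp F.subtypeL)
    refine ⟨this.1, this.2.trans ?_⟩
    have h1 : ‖p x‖ ≤ (‖p‖ + 1) * ‖x‖ :=
      (p.le_opNorm x).trans (by gcongr; linarith)
    have h2 : ‖y.comp F.subtypeL‖ ≤ ‖y‖ := by
      refine ContinuousLinearMap.opNorm_le_bound _ (norm_nonneg _) fun z => ?_
      exact y.le_opNorm z
    calc A * ‖p x‖ * ‖y.comp F.subtypeL‖ ≤ A * ((‖p‖ + 1) * ‖x‖) * ‖y‖ := by gcongr
      _ = _ := by ring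

/-- If a separable Banach space `E` is the topological direct sum of closed subspaces
`E₁, …, E_N` each of which has a besselian Schauder frame, then `E` has a besselian
Schauder frame. -/
theorem besselianSchauderFrame_of_directSum
    {E : Type*} [NormedAddCommGroup E] [NormedSpace ℝ E] [CompleteSpace E]
    [TopologicalSpace.SeparableSpace E]
    (N : ℕ) (F : Fin N → Submodule ℝ E)
    (hclosed : ∀ j, IsClosed (F j : Set E))
    (hdirect : ∀ x : E, ∃! c : Fin N → E, (∀ j, c j ∈ F j) ∧ ∑ j, c j = x)
    (hframes : ∀ j, ∃ (a : ℕ → F j) (b : ℕ → (F j) →L[ℝ] ℝ), IsBesselianSchauderFrame a b) :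
    ∃ (a : ℕ → E) (b : ℕ → E →L[ℝ] ℝ), IsBesselianSchauderFrame a b := by
  haveI : ∀ j, CompleteSpace (F j) := fun j => (hclosed j).completeSpace_coe
  let S : (∀ j, F j) →L[ℝ] E :=
    ∑ j, (F j).subtypeL.comp (ContinuousLinearMap.proj (R := ℝ) (φ := fun j => F j) j)
  have hS : ∀ c, S c = ∑ j, (c j : E) := fun c => by simp [S]
  have hinj : S.ker = ⊥ := by
    rw [LinearMap.ker_eq_bot]
    intro c c' hc
    have hc : S c = S c' := hc
    rw [hS, hS] at hc
    have := (hdirect (∑ j, (c' j : E))).unique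
      (y₁ := fun j => (c j : E)) (y₂ := fun j => (c' j : E))
      ⟨fun j => (c j).2, hc⟩ ⟨fun j => (c' j).2, rfl⟩
    funext j
    exact Subtype.ext (congrFun this j)
  have hsurj : S.range = ⊤ := by
    rw [LinearMap.range_eq_top]
    intro x
    obtain ⟨c, ⟨hc, hx⟩, -⟩ := hdirect x
    exact ⟨fun j => ⟨c j, hc j⟩, (hS _).trans hx⟩
  let T := ContinuousLinearEquiv.ofBijective S hinj hsurj
  have hR : ∀ j, RepBy (fun x => (((ContinuousLinearMap.proj (R := ℝ) (φ := fun j => F j) j).comp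
      (T.symm : E →L[ℝ] (∀ j, F j))) x : E)) := fun j => by
    obtain ⟨a, b, h⟩ := hframes j
    exact RepBy.of_frame (F j) _ a b h
  obtain ⟨a, b, h, hB⟩ := RepBy.sum _ Finset.univ hR
  refine ⟨a, b, fun x => ?_, hB⟩
  have hx : ∑ j, ((T.symm x j : F j) : E) = x := by
    rw [← hS]
    exact T.apply_symm_apply x
  have := h x
  simp only [ContinuousLinearMap.comp_apply, ContinuousLinearMap.proj_apply,
    ContinuousLinearEquiv.coe_coe, hx] at this
  exact this
end

section
/- Let E be a separable Banach space with a besselian Schauder frame and let F be a closed subspace of E that is complemented in E (i.e., there is a bounded linear projection of E onto F). Then the Banach space F has a besselian Schauder frame. -/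
open Filter Topology

/-- If a separable Banach space `E` has a besselian Schauder frame and `F` is a closed
complemented subspace of `E`, then `F` has a besselian Schauder frame. -/
theorem besselianSchauderFrame_of_complemented_subspace
    {E : Type*} [NormedAddCommGroup E] [NormedSpace ℝ E] [CompleteSpace E]
    [TopologicalSpace.SeparableSpace E]
    (a : ℕ → E) (b : ℕ → E →L[ℝ] ℝ) (h : IsBesselianSchauderFrame a b)
    (F : Submodule ℝ E) (hF : IsClosed (F : Set E))
    (P : E →L[ℝ] E) (hP : ∀ x, P (P x) = P x)
    (hrange : LinearMap.range (P : E →ₗ[ℝ] E) = F) :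
    ∃ (c : ℕ → F) (d : ℕ → F →L[ℝ] ℝ), IsBesselianSchauderFrame c d := by
  obtain ⟨hS, A, hA, hB⟩ := h
  have hmem : ∀ x, P x ∈ F := fun x => by
    rw [← hrange]; exact ⟨x, rfl⟩
  have hfix : ∀ x : F, P (x : E) = x := fun x => by
    have hx : (x : E) ∈ LinearMap.range (P : E →ₗ[ℝ] E) := by rw [hrange]; exact x.2
    obtain ⟨z, hz⟩ := hx
    have hz' : P z = (x : E) := hz
    rw [← hz', hP]
  let Q : E →L[ℝ] F := P.codRestrict F hmem
  have hQ : ∀ x : F, Q (x : E) = x := fun x => Subtype.ext (hfix x)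
  refine ⟨fun n => Q (a n), fun n => (b n).comp F.subtypeL, ?_, A * (‖Q‖ + 1), by positivity, ?_⟩
  · intro x
    have h1 := (Q.continuous.tendsto (x : E)).comp (hS (x : E))
    rw [hQ] at h1
    refine h1.congr fun n => ?_
    simp [map_sum]
  · intro x y
    obtain ⟨h1, h2⟩ := hB (x : E) (y.comp Q)
    refine ⟨h1, le_trans h2 ?_⟩
    have h3 : ‖y.comp Q‖ ≤ ‖y‖ * ‖Q‖ := y.opNorm_comp_le Q
    have h4 : ‖(x : E)‖ = ‖x‖ := rfl
    rw [h4]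
    calc A * ‖x‖ * ‖y.comp Q‖ ≤ A * ‖x‖ * (‖y‖ * (‖Q‖ + 1)) := by
          gcongr
          refine h3.trans ?_
          gcongr
          linarith
      _ = A * (‖Q‖ + 1) * ‖x‖ * ‖y‖ := by ring
end

section
/- If a separable Banach space E has a Schauder frame, then there exists a Banach space Z possessing a Schauder basis and a linear isometry T : E → Z whose range T(E) is a closed complemented subspace of Z (so E is isometrically isomorphic to a complemented subspace of Z). -/
open Filter Topology

universe u

/-- A bundled Banach space over `ℝ`. -/
structure BanachSpace where
  /-- the carrier type -/
  X : Type u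
  [nacg : NormedAddCommGroup X]
  [nsp : NormedSpace ℝ X]
  [cplt : CompleteSpace X]

attribute [instance] BanachSpace.nacg BanachSpace.nsp BanachSpace.cplt

/-- `Z` has a Schauder basis: there are vectors `(e n)` and biorthogonal continuous
linear functionals `(f n)` such that every `z` is the norm limit of the partial sums
`∑_{j<n} f j z • e j`. -/
def HasSchauderBasis (Z : Type*) [NormedAddCommGroup Z] [NormedSpace ℝ Z] : Prop :=
  ∃ (e : ℕ → Z) (f : ℕ → Z →L[ℝ] ℝ),
    (∀ i j, f i (e j) = if i = j then 1 else 0) ∧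
    ∀ z : Z, Tendsto (fun n => ∑ j ∈ Finset.range n, f j z • e j) atTop (𝓝 z)

/-- `Z` has an unconditional Schauder basis: there are vectors `(e n)` and biorthogonal
continuous linear functionals `(f n)` such that for every `z` the family
`(f n z • e n)` is unconditionally summable with sum `z`. -/
def HasUnconditionalSchauderBasis (Z : Type*) [NormedAddCommGroup Z] [NormedSpace ℝ Z] : Prop :=
  ∃ (e : ℕ → Z) (f : ℕ → Z →L[ℝ] ℝ),
    (∀ i j, f i (e j) = if i = j then 1 else 0) ∧
    ∀ z : Z, HasSum (fun n => f n z • e n) z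

noncomputable section

namespace SFrame

variable {E : Type u} [NormedAddCommGroup E] [NormedSpace ℝ E]

open ZeroAtInfty

/-- build from sequence -/
def mk {F : Type*} [NormedAddCommGroup F] (g : ℕ → F) (hg : Tendsto g atTop (𝓝 0)) : C₀(ℕ, F) where
  toFun := g
  continuous_toFun := continuous_of_discreteTopology
  zero_at_infty' := by
    rw [Filter.cocompact_eq_cofinite, Nat.cofinite_eq_atTop]; exact hg

@[simp] lemma mk_apply {F : Type*} [NormedAddCommGroup F] (g : ℕ → F) (hg : Tendsto g atTop (𝓝 0)) (n : ℕ) :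
    mk g hg n = g n := rfl

lemma tendsto_zero {F : Type*} [NormedAddCommGroup F] (u : C₀(ℕ, F)) :
    Tendsto (fun n => u n) atTop (𝓝 0) := by
  have := u.zero_at_infty'
  rw [Filter.cocompact_eq_cofinite, Nat.cofinite_eq_atTop] at this
  exact this

lemma norm_le {F : Type*} [NormedAddCommGroup F] (u : C₀(ℕ, F)) {C : ℝ} (hC : 0 ≤ C)
    (h : ∀ n, ‖u n‖ ≤ C) : ‖u‖ ≤ C := by
  rw [← ZeroAtInftyContinuousMap.norm_toBCF_eq_norm]
  exact (BoundedContinuousFunction.norm_le hC).2 h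

/-- ambient space -/
def Amb (E : Type u) [NormedAddCommGroup E] [NormedSpace ℝ E] : Type u := C₀(ℕ, E × ℝ)

instance : NormedAddCommGroup (Amb E) := inferInstanceAs (NormedAddCommGroup C₀(ℕ, E × ℝ))
instance : NormedSpace ℝ (Amb E) := inferInstanceAs (NormedSpace ℝ C₀(ℕ, E × ℝ))
instance [CompleteSpace E] : CompleteSpace (Amb E) := inferInstanceAs (CompleteSpace C₀(ℕ, E × ℝ))
instance : FunLike (Amb E) ℕ (E × ℝ) := inferInstanceAs (FunLike C₀(ℕ, E × ℝ) ℕ (E × ℝ))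

@[simp] lemma Amb.add_apply (u v : Amb E) (n : ℕ) : (u + v) n = u n + v n := rfl
@[simp] lemma Amb.sub_apply (u v : Amb E) (n : ℕ) : (u - v) n = u n - v n := rfl
@[simp] lemma Amb.smul_apply (c : ℝ) (v : Amb E) (n : ℕ) : (c • v) n = c • v n := rfl
@[simp] lemma Amb.zero_apply (n : ℕ) : (0 : Amb E) n = 0 := rfl
@[ext] lemma Amb.ext {u v : Amb E} (h : ∀ n, u n = v n) : u = v := DFunLike.ext _ _ h

/-- evaluation -/
def aev (n : ℕ) : Amb E →L[ℝ] E × ℝ := 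
  LinearMap.mkContinuous { toFun := fun u => u n, map_add' := fun _ _ => rfl, map_smul' := fun _ _ => rfl } 1
    (fun u => by
      rw [one_mul]
      exact (ZeroAtInftyContinuousMap.toBCF (show C₀(ℕ, E × ℝ) from u)).norm_coe_le_norm n)

@[simp] lemma aev_apply (n : ℕ) (u : Amb E) : aev n u = u n := rfl

/-- build from sequence -/
def amk (g : ℕ → E × ℝ) (hg : Tendsto g atTop (𝓝 0)) : Amb E := mk g hg

@[simp] lemma amk_apply (g : ℕ → E × ℝ) (hg : Tendsto g atTop (𝓝 0)) (n : ℕ) :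
    amk g hg n = g n := rfl

lemma anorm_le (u : Amb E) {C : ℝ} (hC : 0 ≤ C)
    (h : ∀ n, ‖u n‖ ≤ C) : ‖u‖ ≤ C := norm_le (show C₀(ℕ, E × ℝ) from u) hC h

lemma atendsto_zero (u : Amb E) : Tendsto (fun n => u n) atTop (𝓝 0) :=
  tendsto_zero (show C₀(ℕ, E × ℝ) from u)

/-- the space of tails: `r n - r (n+1) = c n • a n` -/
def Z0 (a : ℕ → E) : Submodule ℝ (Amb E) where
  carrier := {u | ∀ n, (u n).1 - (u (n+1)).1 = (u n).2 • a n}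
  zero_mem' := by intro n; simp
  add_mem' := by
    intro u v hu hv n
    have := hu n; have := hv n
    simp only [Amb.add_apply, Prod.fst_add, Prod.snd_add, add_smul, ← hu n, ← hv n]
    abel
  smul_mem' := by
    intro c u hu n
    simp only [Amb.smul_apply, Prod.smul_fst, Prod.smul_snd, smul_assoc, ← hu n, smul_sub]

lemma mem_Z0 {a : ℕ → E} {u : Amb E} :
    u ∈ Z0 a ↔ ∀ n, (u n).1 - (u (n+1)).1 = (u n).2 • a n := Iff.rfl

lemma isClosed_Z0 (a : ℕ → E) : IsClosed (Z0 a : Set (Amb E)) := by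
  have : (Z0 a : Set (Amb E)) =
      ⋂ n, {u | (aev n u).1 - (aev (n+1) u).1 = (aev n u).2 • a n} := by
    ext u; simp [mem_Z0]
  rw [this]
  exact isClosed_iInter fun n => isClosed_eq (by fun_prop) (by fun_prop)

/-- the basis -/
def e (a : ℕ → E) (n : ℕ) : Z0 a :=
  ⟨amk (fun m => (if m ≤ n then a n else 0, if m = n then 1 else 0)) (by
    refine tendsto_const_nhds.congr' ?_
    filter_upwards [eventually_gt_atTop n] with m hm
    rw [if_neg (by omega), if_neg (by omega)]; rfl), by
    intro m
    simp only [amk_apply]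
    rcases lt_trichotomy m n with h | h | h
    · rw [if_pos (by omega), if_pos (by omega), if_neg (by omega)]; simp
    · subst h; simp
    · rw [if_neg (by omega), if_neg (by omega), if_neg (by omega)]; simp⟩

lemma e_apply (a : ℕ → E) (n m : ℕ) :
    (e a n : Amb E) m = (if m ≤ n then a n else 0, if m = n then 1 else 0) := rfl

/-- coordinates -/
def f (a : ℕ → E) (n : ℕ) : Z0 a →L[ℝ] ℝ :=
  (ContinuousLinearMap.snd ℝ E ℝ) ∘L (aev n) ∘L (Z0 a).subtypeL

lemma f_apply (a : ℕ → E) (n : ℕ) (z : Z0 a) : f a n z = (z.1 n).2 := rfl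

lemma partial_apply (a : ℕ → E) (z : Z0 a) (n m : ℕ) :
    ((∑ j ∈ Finset.range n, f a j z • e a j : Z0 a) : Amb E) m =
      if m < n then ((z.1 m).1 - (z.1 n).1, (z.1 m).2) else 0 := by
  induction n with
  | zero => simp
  | succ n ih =>
    have hz := z.2 n
    rw [Finset.sum_range_succ, Submodule.coe_add, Amb.add_apply, ih,
      Submodule.coe_smul, Amb.smul_apply, e_apply, f_apply]
    rcases lt_trichotomy m n with h | h | h
    · rw [if_pos h, if_pos (show m < n + 1 by omega), if_pos (by omega), if_neg (by omega)]
      ext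
      · simp [← hz]
      · simp
    · subst h
      ext
      · simp [← hz]
      · simp
    · rw [if_neg (by omega), if_neg (by omega), if_neg (by omega), if_neg (by omega)]
      simp

lemma basis (a : ℕ → E) : HasSchauderBasis (Z0 a) := by
  refine ⟨e a, f a, fun i j => by simp [f_apply, e_apply], fun z => ?_⟩
  rw [Metric.tendsto_atTop]
  intro ε hε
  obtain ⟨N, hN⟩ := Metric.tendsto_atTop.1 (atendsto_zero z.1) (ε/2) (by positivity)
  refine ⟨N, fun n hn => lt_of_le_of_lt ?_ (half_lt_self hε)⟩
  rw [dist_eq_norm, Submodule.coe_norm, Submodule.coe_sub]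
  refine anorm_le _ (by positivity) fun m => ?_
  rw [Amb.sub_apply, partial_apply]
  split_ifs with hm
  · have h1 := hN n hn
    rw [dist_zero_right] at h1
    have h2 : ((z.1 m).1 - (z.1 n).1, (z.1 m).2) - z.1 m = (-(z.1 n).1, 0) := by
      ext <;> simp
    rw [h2, Prod.norm_def]
    simp only [norm_neg, norm_zero]
    exact max_le ((norm_fst_le _).trans h1.le) (by positivity)
  · have h1 := hN m (by omega)
    rw [dist_zero_right] at h1
    rw [zero_sub, norm_neg]; exact h1.le

/-- first value -/
def Q (a : ℕ → E) : Z0 a →L[ℝ] E :=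
  (ContinuousLinearMap.fst ℝ E ℝ) ∘L (aev 0) ∘L (Z0 a).subtypeL

lemma Q_apply (a : ℕ → E) (z : Z0 a) : Q a z = (z.1 0).1 := rfl

/-- embedding, algebraically -/
def T0 (a : ℕ → E) (b : ℕ → E →L[ℝ] ℝ) (h : IsSchauderFrame a b)
    (hb : ∀ x, Tendsto (fun n => b n x) atTop (𝓝 0)) : E →ₗ[ℝ] Z0 a where
  toFun x := ⟨amk (fun n => (x - ∑ j ∈ Finset.range n, b j x • a j, b n x)) (by
      have h1 := (tendsto_const_nhds (x := x)).sub (h x)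
      rw [sub_self] at h1
      exact h1.prodMk_nhds (hb x)), by
    intro n
    simp [Finset.sum_range_succ]⟩
  map_add' x y := by
    ext n
    · simp [add_smul, Finset.sum_add_distrib]; abel
    · simp
  map_smul' c x := by
    ext n
    · simp [mul_smul, Finset.smul_sum, smul_sub]
    · simp

lemma T0_apply (a : ℕ → E) (b : ℕ → E →L[ℝ] ℝ) (h : IsSchauderFrame a b)
    (hb : ∀ x, Tendsto (fun n => b n x) atTop (𝓝 0)) (x : E) (n : ℕ) :
    (T0 a b h hb x : Amb E) n = (x - ∑ j ∈ Finset.range n, b j x • a j, b n x) := rfl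

instance [CompleteSpace E] (a : ℕ → E) : CompleteSpace (Z0 a) := (isClosed_Z0 a).completeSpace_coe

lemma T0_cont [CompleteSpace E] (a : ℕ → E) (b : ℕ → E →L[ℝ] ℝ) (h : IsSchauderFrame a b)
    (hb : ∀ x, Tendsto (fun n => b n x) atTop (𝓝 0)) : Continuous (T0 a b h hb) := by
  refine LinearMap.continuous_of_seq_closed_graph _ fun x x0 y hx hy => ?_
  ext1
  refine DFunLike.ext _ _ fun n => ?_
  have h1 : Tendsto (fun k => ((aev n) ∘L (Z0 a).subtypeL) (T0 a b h hb (x k))) atTop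
      (𝓝 (((aev n) ∘L (Z0 a).subtypeL) y)) :=
    (ContinuousLinearMap.continuous _).continuousAt.tendsto.comp hy
  have h2 : Continuous (fun x : E => (x - ∑ j ∈ Finset.range n, b j x • a j, b n x)) := by
    fun_prop
  have h3 := (h2.tendsto x0).comp hx
  exact tendsto_nhds_unique h1 h3

lemma transfer {X Y : Type*} [NormedAddCommGroup X] [NormedSpace ℝ X] [NormedAddCommGroup Y]
    [NormedSpace ℝ Y] (φ : X ≃L[ℝ] Y) (hX : HasSchauderBasis X) : HasSchauderBasis Y := by
  obtain ⟨e, f, h1, h2⟩ := hX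
  refine ⟨fun n => φ (e n), fun n => (f n) ∘L (φ.symm : Y →L[ℝ] X), fun i j => by simp [h1], fun y => ?_⟩
  have := (φ.continuous.tendsto _).comp (h2 (φ.symm y))
  simpa [Function.comp_def] using this

lemma main_aux [CompleteSpace E] (a : ℕ → E) (b : ℕ → E →L[ℝ] ℝ) (h : IsSchauderFrame a b)
    (hb : ∀ x, Tendsto (fun n => b n x) atTop (𝓝 0)) :
    HasSchauderBasis (E × (Q a).ker) := by
  let T : E →L[ℝ] Z0 a := ⟨T0 a b h hb, T0_cont a b h hb⟩
  have hQT : ∀ x, Q a (T x) = x := fun x => by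
    change (((T0 a b h hb x : Amb E) 0)).1 = x
    simp [T0_apply]
  let R : Z0 a →L[ℝ] (Q a).ker :=
    (ContinuousLinearMap.id ℝ (Z0 a) - T ∘L Q a).codRestrict _ (fun z => by
      simp [hQT])
  let φ : Z0 a ≃L[ℝ] E × (Q a).ker := ContinuousLinearEquiv.equivOfInverse
    ((Q a).prod R) (T.coprod (Q a).ker.subtypeL)
    (fun z => by simp [R])
    (fun p => by
      have := p.2.2
      rw [LinearMap.mem_ker] at this
      have h' : Q a (p.2 : Z0 a) = 0 := this
      ext1
      · simp [hQT, h']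
      · ext1; simp [R, hQT, h'])
  exact transfer φ (basis a)

lemma rescale (a : ℕ → E) (b : ℕ → E →L[ℝ] ℝ) (h : IsSchauderFrame a b) :
    ∃ (a' : ℕ → E) (b' : ℕ → E →L[ℝ] ℝ), IsSchauderFrame a' b' ∧
      ∀ x, Tendsto (fun n => b' n x) atTop (𝓝 0) := by
  let v : ℕ → ℝ := fun n => ((n:ℝ) + 1) * (‖b n‖ + 1)
  have hv : ∀ n, 0 < v n := fun n => by positivity
  refine ⟨fun n => v n • a n, fun n => (v n)⁻¹ • b n, fun x => ?_, fun x => ?_⟩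
  · refine (h x).congr fun n => Finset.sum_congr rfl fun j _ => ?_
    rw [smul_apply, smul_smul, smul_eq_mul, mul_right_comm,
      inv_mul_cancel₀ (hv _).ne', one_mul]
  · have h1 := (tendsto_one_div_add_atTop_nhds_zero_nat (𝕜 := ℝ)).mul_const ‖x‖
    rw [zero_mul] at h1
    refine squeeze_zero_norm (fun n => ?_) h1
    rw [smul_apply, norm_smul, norm_inv, Real.norm_of_nonneg (hv n).le,
      inv_mul_le_iff₀ (hv n)]
    have h2 := (b n).le_opNorm x
    have h3 : v n * (1 / ((n:ℝ) + 1) * ‖x‖) = (‖b n‖ + 1) * ‖x‖ := by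
      simp only [v]; field_simp
    rw [h3]
    nlinarith [norm_nonneg x]

end SFrame

end

/-- If a separable Banach space `E` has a Schauder frame, then there is a Banach space
`Z` with a Schauder basis and a linear isometry `T : E → Z` whose range is a closed
complemented subspace of `Z`. -/
theorem schauderFrame_implies_isometric_complemented_in_basis_space
    {E : Type u} [NormedAddCommGroup E] [NormedSpace ℝ E] [CompleteSpace E]
    [TopologicalSpace.SeparableSpace E]
    (a : ℕ → E) (b : ℕ → E →L[ℝ] ℝ) (h : IsSchauderFrame a b) :
    ∃ Z : BanachSpace.{u}, HasSchauderBasis Z.X ∧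
      ∃ T : E →ₗᵢ[ℝ] Z.X,
        IsClosed (Set.range T) ∧
        ∃ P : Z.X →L[ℝ] Z.X, (∀ z, P (P z) = P z) ∧ Set.range P = Set.range T := by
  obtain ⟨a', b', h', hb⟩ := SFrame.rescale a b h
  refine ⟨⟨E × (SFrame.Q a').ker⟩, SFrame.main_aux a' b' h' hb,
    LinearIsometry.inl ℝ E (SFrame.Q a').ker, ?_, ?_⟩
  · exact (LinearIsometry.inl ℝ E (SFrame.Q a').ker).isometry.isClosedEmbedding.isClosed_range
  · refine ⟨(ContinuousLinearMap.inl ℝ E (SFrame.Q a').ker) ∘L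
      (ContinuousLinearMap.fst ℝ E (SFrame.Q a').ker), fun z => rfl, ?_⟩
    ext z
    constructor
    · rintro ⟨w, rfl⟩; exact ⟨w.1, rfl⟩
    · rintro ⟨x, rfl⟩; exact ⟨(x, 0), rfl⟩
end

section
/- Let E be a separable Banach space. If there exist a Banach space Z with a Schauder basis, a closed complemented subspace F of Z, and a continuous linear isomorphism (bounded bijection with bounded inverse) from E onto F, then E has a Schauder frame. -/
open Filter Topology

/-- If a separable Banach space `E` is isomorphic, via a continuous linear isomorphism,
to a closed complemented subspace `F` of a Banach space `Z` having a Schauder basis,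
then `E` has a Schauder frame. -/
theorem schauderFrame_of_complemented_in_basis_space
    {E : Type*} [NormedAddCommGroup E] [NormedSpace ℝ E] [CompleteSpace E]
    [TopologicalSpace.SeparableSpace E]
    (Z : Type*) [NormedAddCommGroup Z] [NormedSpace ℝ Z] [CompleteSpace Z]
    (hZ : HasSchauderBasis Z)
    (F : Submodule ℝ Z) (hF : IsClosed (F : Set Z))
    (P : Z →L[ℝ] Z) (hP : ∀ z, P (P z) = P z)
    (hrange : LinearMap.range (P : Z →ₗ[ℝ] Z) = F)
    (e : E ≃L[ℝ] F) :
    ∃ (a : ℕ → E) (b : ℕ → E →L[ℝ] ℝ), IsSchauderFrame a b := by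
  obtain ⟨u, f, -, hf⟩ := hZ
  have hPm : ∀ z, P z ∈ F := fun z => by
    rw [← hrange]; exact ⟨z, rfl⟩
  have hPF : ∀ y : F, P.codRestrict F hPm (y : Z) = y := by
    rintro ⟨y, hy⟩
    apply Subtype.ext
    have hy' := hy
    rw [← hrange] at hy'
    obtain ⟨z, rfl⟩ := hy'
    exact hP z
  let Q : Z →L[ℝ] E := (e.symm : F →L[ℝ] E).comp (P.codRestrict F hPm)
  let J : E →L[ℝ] Z := F.subtypeL.comp (e : E →L[ℝ] F)
  have hQJ : ∀ x, Q (J x) = x := fun x => by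
    change e.symm (P.codRestrict F hPm (e x : Z)) = x
    rw [hPF, e.symm_apply_apply]
  refine ⟨fun n => Q (u n), fun n => (f n).comp J, fun x => ?_⟩
  have h := (Q.continuous.tendsto (J x)).comp (hf (J x))
  rw [hQJ] at h
  refine h.congr fun n => ?_
  simp [map_sum]
end

section
/- Let E be a weakly sequentially complete separable Banach space that has a besselian Schauder frame. Then there exists a Banach space W possessing an unconditional Schauder basis and a linear isometry T : E → W whose range T(E) is a closed complemented subspace of W (so E is isometrically isomorphic to a complemented subspace of W). -/
open Filter Topology

/-- `E` is weakly sequentially complete: every weakly Cauchy sequence is weakly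
convergent. -/
def WeaklySequentiallyComplete (E : Type*) [NormedAddCommGroup E] [NormedSpace ℝ E] : Prop :=
  ∀ x : ℕ → E,
    (∀ y : E →L[ℝ] ℝ, ∃ l : ℝ, Tendsto (fun n => y (x n)) atTop (𝓝 l)) →
    ∃ x₀ : E, ∀ y : E →L[ℝ] ℝ, Tendsto (fun n => y (x n)) atTop (𝓝 (y x₀))

universe u

theorem aux_summable {E : Type u} [NormedAddCommGroup E] [NormedSpace ℝ E] [CompleteSpace E]
    [TopologicalSpace.SeparableSpace E] (hE : WeaklySequentiallyComplete E) (z : ℕ → E)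
    (hz : ∀ y : E →L[ℝ] ℝ, Summable (fun n => |y (z n)|)) : Summable z := by
  have hs : ∀ (y : E →L[ℝ] ℝ) (M : ℕ → Bool), Summable (fun n => if M n then y (z n) else 0) := by
    intro y M
    refine Summable.of_norm_bounded (hz y) fun n => ?_
    split_ifs <;> simp
  have hx : ∀ M : ℕ → Bool, ∃ x : E, ∀ y : E →L[ℝ] ℝ,
      y x = ∑' n, (if M n then y (z n) else 0) := by
    intro M
    have key : ∀ y : E →L[ℝ] ℝ, Tendsto (fun N => y (∑ n ∈ Finset.range N, if M n then z n else 0))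
        atTop (𝓝 (∑' n, (if M n then y (z n) else 0))) := by
      intro y
      have := (hs y M).hasSum.tendsto_sum_nat
      refine this.congr fun N => ?_
      rw [map_sum]
      refine Finset.sum_congr rfl fun n _ => ?_
      split_ifs <;> simp
    obtain ⟨x, hx⟩ := hE _ (fun y => ⟨_, key y⟩)
    exact ⟨x, fun y => tendsto_nhds_unique (hx y) (key y)⟩
  choose φ hφ using hx
  have hcont : ∀ y : E →L[ℝ] ℝ, Continuous (fun M => y (φ M)) := by
    intro y
    simp only [hφ]
    refine continuous_tsum (u := fun n => |y (z n)|) (fun n => ?_) (hz y) fun n M => ?_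
    · have : Continuous (fun b : Bool => if b then y (z n) else 0) := continuous_of_discreteTopology
      exact this.comp (continuous_apply n)
    · split_ifs <;> simp
  rw [summable_iff_vanishing_norm]
  intro ε hε
  set d := TopologicalSpace.denseSeq E
  have hball : ∀ (c : E) (r : ℝ), 0 ≤ r → {M | ‖φ M - c‖ ≤ r} =
      ⋂ y : E →L[ℝ] ℝ, {M | ‖y (φ M) - y c‖ ≤ r * ‖y‖} := by
    intro c r hr
    ext M
    simp only [Set.mem_ofPred_eq, Set.mem_iInter]
    constructor
    · intro h y
      rw [← map_sub, mul_comm]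
      exact (y.le_opNorm _).trans (by gcongr)
    · intro h
      refine NormedSpace.norm_le_dual_bound ℝ _ hr fun y => ?_
      rw [map_sub]; exact h y
  obtain ⟨i, M₀, hM₀⟩ := nonempty_interior_of_iUnion_of_closed
    (f := fun i : ℕ => {M | ‖φ M - d i‖ ≤ ε / 3})
    (fun i => by
      rw [hball _ _ (by positivity)]
      exact isClosed_iInter fun y =>
        isClosed_le (((hcont y).sub continuous_const).norm) continuous_const)
    (by
      rw [Set.eq_univ_iff_forall]
      intro M
      obtain ⟨i, hi⟩ := (TopologicalSpace.denseRange_denseSeq E).exists_dist_lt (φ M)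
        (show 0 < ε / 3 by positivity)
      rw [dist_eq_norm] at hi
      exact Set.mem_iUnion.2 ⟨i, hi.le⟩)
  rw [mem_interior_iff_mem_nhds, nhds_pi, Filter.mem_pi] at hM₀
  obtain ⟨I, hI, t, ht, hsub⟩ := hM₀
  refine ⟨hI.toFinset, fun F hF => ?_⟩
  set M1 : ℕ → Bool := fun n => if n ∈ hI.toFinset then M₀ n else false
  set M2 : ℕ → Bool := fun n => if n ∈ F then true else M1 n
  have h1 : ‖φ M1 - d i‖ ≤ ε / 3 := by
    apply hsub
    intro n hn
    have : M1 n = M₀ n := by simp [M1, hn]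
    rw [this]; exact mem_of_mem_nhds (ht n)
  have h2 : ‖φ M2 - d i‖ ≤ ε / 3 := by
    apply hsub
    intro n hn
    have hnF : n ∉ F := fun h => Finset.disjoint_left.1 hF h (by simpa using hn)
    have : M2 n = M₀ n := by simp [M2, M1, hn, hnF]
    rw [this]; exact mem_of_mem_nhds (ht n)
  have h3 : ∑ n ∈ F, z n = φ M2 - φ M1 := by
    refine (SeparatingDual.eq_iff_forall_dual_eq (R := ℝ)).2 fun y => ?_
    change y _ = y _
    rw [map_sub, hφ, hφ, ← (hs y M2).tsum_sub (hs y M1), map_sum, tsum_eq_sum (s := F)]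
    · refine Finset.sum_congr rfl fun n hn => ?_
      have : n ∉ hI.toFinset := Finset.disjoint_left.1 hF hn
      simp only [M2, M1, hn, this]; simp
    · intro n hn
      simp [M2, hn]
  rw [h3]
  calc ‖φ M2 - φ M1‖ = ‖(φ M2 - d i) - (φ M1 - d i)‖ := by congr 1; abel
    _ ≤ ‖φ M2 - d i‖ + ‖φ M1 - d i‖ := norm_sub_le _ _
    _ < ε := by linarith

theorem aux_assembly {E : Type u} [NormedAddCommGroup E] [NormedSpace ℝ E] [CompleteSpace E]
    (a : ℕ → E) (b : ℕ → E →L[ℝ] ℝ) (hab : ∀ x, HasSum (fun n => b n x • a n) x)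
    {V : Type u} [NormedAddCommGroup V] [NormedSpace ℝ V] [CompleteSpace V]
    (D : ℕ → V) (f : ℕ → V →L[ℝ] ℝ) (hf : ∀ i j, f i (D j) = if i = j then 1 else 0)
    (Q : Finset ℕ → V →L[ℝ] V) (hQ : ∀ F v, ‖Q F v‖ ≤ ‖v‖)
    (hQD : ∀ F n, Q F (D n) = if n ∈ F then D n else 0)
    (Sg : V →L[ℝ] StrongDual ℝ (StrongDual ℝ E))
    (hSg : ∀ n, Sg (D n) = NormedSpace.inclusionInDoubleDualLi ℝ (a n))
    (hb : ∀ x, Summable (fun n => b n x • D n)) :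
    ∃ W : BanachSpace.{u}, HasUnconditionalSchauderBasis W.X ∧
      ∃ T : E →ₗᵢ[ℝ] W.X,
        IsClosed (Set.range T) ∧
        ∃ P : W.X →L[ℝ] W.X, (∀ z, P (P z) = P z) ∧ Set.range P = Set.range T := by
  set J := NormedSpace.inclusionInDoubleDualLi ℝ (E := E)
  set W0 : Submodule ℝ V := (Submodule.span ℝ (Set.range D)).topologicalClosure
  have hind : ∀ (p : V → Prop), IsClosed {v | p v} → (∀ n, p (D n)) → p 0 →
      (∀ v w, p v → p w → p (v + w)) → (∀ (c : ℝ) v, p v → p (c • v)) → ∀ v ∈ W0, p v := by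
    intro p hp h1 h0 h2 h3 v hv
    have : (Submodule.span ℝ (Set.range D) : Set V) ⊆ {v | p v} := by
      intro w hw
      refine Submodule.span_induction (p := fun w _ => p w) ?_ h0 ?_ ?_ hw
      · rintro _ ⟨n, rfl⟩; exact h1 n
      · intro v w _ _; exact h2 v w
      · intro c v _; exact h3 c v
    exact closure_minimal this hp hv
  have hDW : ∀ n, D n ∈ W0 := fun n =>
    Submodule.le_topologicalClosure _ (Submodule.subset_span ⟨n, rfl⟩)
  have hcl : IsClosed (W0 : Set V) := Submodule.isClosed_topologicalClosure _
  have hQf : ∀ F, ∀ v ∈ W0, Q F v = ∑ n ∈ F, f n v • D n := by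
    intro F
    refine hind _ ?_ ?_ ?_ ?_ ?_
    · exact isClosed_eq (Q F).continuous (by fun_prop)
    · intro n
      rw [hQD]; simp [hf]
    · simp
    · intro v w hv hw
      simp [hv, hw, add_smul, Finset.sum_add_distrib]
    · intro c v hv
      simp [hv, Finset.smul_sum, smul_smul]
  have hlim : ∀ v ∈ W0, Tendsto (fun F => Q F v) atTop (𝓝 v) := by
    refine hind _ ?_ ?_ ?_ ?_ ?_
    · refine isClosed_of_closure_subset fun v hv => ?_
      rw [Set.mem_ofPred_eq, Metric.tendsto_nhds]
      intro ε hε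
      obtain ⟨w, hw, hvw⟩ := Metric.mem_closure_iff.1 hv (ε / 3) (by positivity)
      filter_upwards [Metric.tendsto_nhds.1 hw (ε / 3) (by positivity)] with F hF
      have h1 : dist (Q F v) (Q F w) ≤ dist v w := by
        rw [dist_eq_norm, dist_eq_norm, ← map_sub]; exact hQ _ _
      have := dist_triangle4 (Q F v) (Q F w) w v
      rw [dist_comm w v] at this
      linarith
    · intro n
      refine tendsto_const_nhds.congr' ?_
      filter_upwards [eventually_ge_atTop {n}] with F hF
      rw [hQD, if_pos (by simpa using hF)]
    · simp
    · intro v w hv hw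
      simpa using hv.add hw
    · intro c v hv
      simpa using hv.const_smul c
  have hbasis : HasUnconditionalSchauderBasis W0 := by
    refine ⟨fun n => ⟨D n, hDW n⟩, fun n => (f n).comp W0.subtypeL, fun i j => hf i j, fun z => ?_⟩
    have h1 : Tendsto (fun F => ∑ n ∈ F, f n z • D n) atTop (𝓝 (z : V)) :=
      (hlim z z.2).congr fun F => hQf F z z.2
    unfold HasSum
    rw [SummationFilter.unconditional_filter, tendsto_subtype_rng]
    simpa using h1
  have hT : ∀ x, HasSum (fun n => b n x • D n) (∑' n, b n x • D n) := fun x => (hb x).hasSum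
  let T0 : E →L[ℝ] V := continuousLinearMapOfTendsto (l := atTop)
    (g := fun N : ℕ => ∑ n ∈ Finset.range N, (b n).smulRight (D n))
    (f := fun x => ∑' n, b n x • D n) (by
      rw [tendsto_pi_nhds]
      intro x
      simpa using (hT x).tendsto_sum_nat)
  have hT0 : ∀ x, T0 x = ∑' n, b n x • D n := fun x => rfl
  have hT0W : ∀ x, T0 x ∈ W0 := by
    intro x
    exact hcl.mem_of_tendsto (hT x)
      (Eventually.of_forall fun F => W0.sum_mem fun n _ => W0.smul_mem _ (hDW n))
  let T1 : E →L[ℝ] W0 := T0.codRestrict W0 hT0W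
  have hJcl : IsClosed (Set.range J) := by
    have h := J.isometry.isUniformInducing.isComplete_range
    exact h.isClosed
  have hSW : ∀ v ∈ W0, Sg v ∈ LinearMap.range J.toLinearMap := by
    refine hind _ ?_ ?_ ?_ ?_ ?_
    · exact hJcl.preimage Sg.continuous
    · intro n; rw [hSg]; exact ⟨a n, rfl⟩
    · simp
    · intro v w hv hw
      rw [map_add]; exact Submodule.add_mem _ hv hw
    · intro c v hv
      rw [map_smul]; exact Submodule.smul_mem _ _ hv
  let S : W0 →L[ℝ] E := (J.equivRange.symm.toContinuousLinearEquiv : _ →L[ℝ] E).comp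
    ((Sg.comp W0.subtypeL).codRestrict _ (fun v => hSW v v.2))
  have hJS : ∀ v : W0, J (S v) = Sg v := by
    intro v
    have := J.equivRange.apply_symm_apply ⟨Sg v, hSW v v.2⟩
    exact congrArg Subtype.val this
  have hST : Function.RightInverse T1 S := by
    intro x
    apply J.injective
    rw [hJS]
    have h1 : HasSum (fun n => Sg (b n x • D n)) (Sg (T0 x)) := (hT x).mapL Sg
    have h2 : HasSum (fun n => J (b n x • a n)) (J x) := (hab x).mapL J.toContinuousLinearMap
    refine h1.unique (h2.congr_fun ?_)
    intro n
    simp [hSg]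
  let Φ := ContinuousLinearEquiv.equivOfRightInverse S T1 hST
  refine ⟨⟨E × LinearMap.ker (S : W0 →ₗ[ℝ] E)⟩, ?_, ?_⟩
  · obtain ⟨e, g, hg, hsum⟩ := hbasis
    refine ⟨fun n => Φ (e n), fun n => (g n).comp (Φ.symm : _ →L[ℝ] W0), fun i j => ?_, fun z => ?_⟩
    · simpa using hg i j
    · have := (hsum (Φ.symm z)).mapL Φ.toContinuousLinearMap
      simpa using this
  · refine ⟨LinearIsometry.mk (LinearMap.inl ℝ E _) (fun x => by simp [Prod.norm_def]), ?_,
      (ContinuousLinearMap.inl ℝ E _).comp (ContinuousLinearMap.fst ℝ E _), fun z => by simp, ?_⟩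
    · exact (LinearIsometry.isometry _).isClosedEmbedding.isClosed_range
    · ext z
      constructor
      · rintro ⟨w, rfl⟩; exact ⟨w.1, rfl⟩
      · rintro ⟨x, rfl⟩; exact ⟨(x, 0), rfl⟩

/-- The sequence space. -/
abbrev L1 : Type := lp (fun _ : ℕ => ℝ) 1

theorem aux_norm_single (F : Finset ℕ) (c : ℕ → ℝ) :
    ‖∑ n ∈ F, (lp.single 1 n (c n) : L1)‖ = ∑ n ∈ F, |c n| := by
  have := lp.norm_sum_single (E := fun _ : ℕ => ℝ) (p := 1) (by simp) c F
  simpa using this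

theorem aux_norm_le (F : Finset ℕ) (v : L1) : ∑ n ∈ F, |v n| ≤ ‖v‖ := by
  have := lp.sum_rpow_le_norm_rpow (E := fun _ : ℕ => ℝ) (p := 1) (by simp) v F
  simpa using this

/-- Coordinate projection. -/
noncomputable def PF (F : Finset ℕ) : L1 →L[ℝ] L1 :=
  ∑ n ∈ F, (lp.singleContinuousLinearMap ℝ (fun _ : ℕ => ℝ) 1 n).comp
    (lp.evalCLM ℝ (fun _ : ℕ => ℝ) 1 n)

theorem PF_apply (F : Finset ℕ) (v : L1) : PF F v = ∑ n ∈ F, (lp.single 1 n (v n) : L1) := by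
  simp [PF, lp.evalCLM]

theorem PF_norm (F : Finset ℕ) (v : L1) : ‖PF F v‖ ≤ ‖v‖ := by
  rw [PF_apply, aux_norm_single]; exact aux_norm_le F v

theorem PF_single (F : Finset ℕ) (n : ℕ) (c : ℝ) :
    PF F (lp.single 1 n c : L1) = if n ∈ F then (lp.single 1 n c : L1) else 0 := by
  rw [PF_apply]
  have : ∀ m ∈ F, (lp.single 1 m ((lp.single 1 n c : L1) m) : L1)
      = if m = n then (lp.single 1 n c : L1) else 0 := by
    intro m _
    split_ifs with h
    · subst h; simp
    · rw [lp.single_apply_ne _ _ _ h, lp.single_zero]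
  rw [Finset.sum_congr rfl this]
  simp

theorem aux_vanish {Y : Type u} [NormedAddCommGroup Y] [NormedSpace ℝ Y]
    (U : ℕ → Y →L[ℝ] L1)
    (h : ∀ ε > 0, ∃ s : Finset ℕ, ∀ F, Disjoint F s → ∀ y, ‖∑ n ∈ F, U n y‖ ≤ ε * ‖y‖) :
    Summable U := by
  refine (summable_iff_vanishing_norm (E := Y →L[ℝ] L1)).2 fun ε hε => ?_
  obtain ⟨s, hs⟩ := h (ε / 2) (by positivity)
  refine ⟨s, fun F hF => ?_⟩
  refine lt_of_le_of_lt (ContinuousLinearMap.opNorm_le_bound _ (M := ε / 2) (by positivity)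
    fun y => ?_) (by linarith)
  rw [sum_apply]
  exact hs F hF y

theorem aux_summable_op {E : Type u} [NormedAddCommGroup E] [NormedSpace ℝ E]
    [CompleteSpace E] (z : ℕ → E) (hz : Summable z) :
    Summable (fun n => ((NormedSpace.inclusionInDoubleDual ℝ E (z n)).smulRight
      (lp.single 1 n (1 : ℝ) : L1) : StrongDual ℝ E →L[ℝ] L1)) := by
  rw [summable_iff_vanishing_norm] at hz
  refine aux_vanish _ ?_
  intro ε hε
  obtain ⟨s, hs⟩ := hz (ε / 3) (by positivity)
  refine ⟨s, fun F hF => ?_⟩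
  have hle : ∀ G ⊆ F, ∀ y : StrongDual ℝ E, |∑ n ∈ G, y (z n)| ≤ ε / 3 * ‖y‖ := by
    intro G hG y
    rw [← map_sum, mul_comm]
    refine (y.le_opNorm _).trans ?_
    gcongr
    exact (hs G (Finset.disjoint_of_subset_left hG hF)).le
  intro y
  have h1 : ∑ n ∈ F, ((NormedSpace.inclusionInDoubleDual ℝ E (z n)).smulRight
      (lp.single 1 n (1 : ℝ) : L1) : StrongDual ℝ E →L[ℝ] L1) y
      = ∑ n ∈ F, (lp.single 1 n (y (z n)) : L1) := by
    refine Finset.sum_congr rfl fun n _ => ?_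
    simp [← lp.single_smul]
  rw [h1, aux_norm_single]
  rw [← Finset.sum_filter_add_sum_filter_not F (fun n => 0 ≤ y (z n))]
  have h2 : ∑ n ∈ F with 0 ≤ y (z n), |y (z n)| ≤ ε / 3 * ‖y‖ := by
    rw [Finset.sum_congr rfl (g := fun n => y (z n))
      (fun n hn => abs_of_nonneg (Finset.mem_filter.1 hn).2)]
    exact (le_abs_self _).trans (hle _ (Finset.filter_subset _ _) y)
  have h3 : ∑ n ∈ F with ¬ 0 ≤ y (z n), |y (z n)| ≤ ε / 3 * ‖y‖ := by
    rw [Finset.sum_congr rfl (g := fun n => - y (z n))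
      (fun n hn => abs_of_neg (not_le.1 (Finset.mem_filter.1 hn).2)), Finset.sum_neg_distrib]
    exact (neg_le_abs _).trans (hle _ (Finset.filter_subset _ _) y)
  have h4 : 0 ≤ ε * ‖y‖ := by positivity
  refine (add_le_add h2 h3).trans ?_
  linarith

/-- If a weakly sequentially complete separable Banach space `E` has a besselian
Schauder frame, then there is a Banach space `W` with an unconditional Schauder basis
and a linear isometry `T : E → W` whose range is a closed complemented subspace
of `W`. -/
theorem besselianSchauderFrame_implies_isometric_complemented_in_unconditional_basis_space
    {E : Type u} [NormedAddCommGroup E] [NormedSpace ℝ E] [CompleteSpace E]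
    [TopologicalSpace.SeparableSpace E]
    (hE : WeaklySequentiallyComplete E)
    (a : ℕ → E) (b : ℕ → E →L[ℝ] ℝ) (h : IsBesselianSchauderFrame a b) :
    ∃ W : BanachSpace.{u}, HasUnconditionalSchauderBasis W.X ∧
      ∃ T : E →ₗᵢ[ℝ] W.X,
        IsClosed (Set.range T) ∧
        ∃ P : W.X →L[ℝ] W.X, (∀ z, P (P z) = P z) ∧ Set.range P = Set.range T := by
  obtain ⟨hfr, A, hA, hbes⟩ := h
  have hsum : ∀ x, Summable (fun n => b n x • a n) := fun x =>
    aux_summable hE _ fun y => by simpa [abs_mul] using (hbes x y).1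
  have hab : ∀ x, HasSum (fun n => b n x • a n) x := by
    intro x
    have h1 := (hsum x).hasSum
    rwa [tendsto_nhds_unique h1.tendsto_sum_nat (hfr x)] at h1
  set w : ℕ → ℝ := fun n => (1 / 2) ^ n / (1 + ‖b n‖) with hw
  have hwpos : ∀ n, 0 < w n := fun n => by positivity
  let J := NormedSpace.inclusionInDoubleDual ℝ E
  let D : ℕ → (StrongDual ℝ E →L[ℝ] L1) × L1 := fun n =>
    ((J (a n)).smulRight (lp.single 1 n (1 : ℝ) : L1), (lp.single 1 n (w n) : L1))
  refine aux_assembly a b hab D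
    (fun n => (w n)⁻¹ • (lp.evalCLM ℝ (fun _ : ℕ => ℝ) 1 n).comp (ContinuousLinearMap.snd ℝ _ _))
    ?_ (fun F => ((ContinuousLinearMap.compL ℝ (StrongDual ℝ E) L1 L1 (PF F)).prodMap (PF F)))
    ?_ ?_
    ((ContinuousLinearMap.compL ℝ (StrongDual ℝ E) L1 ℝ (lp.tsumCLM ℝ ℕ ℝ)).comp
      (ContinuousLinearMap.fst ℝ _ _)) ?_ ?_
  · intro i j
    have : (lp.evalCLM ℝ (fun _ : ℕ => ℝ) 1 i) (lp.single 1 j (w j) : L1)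
      = (lp.single 1 j (w j) : L1) i := rfl
    simp only [smul_apply, ContinuousLinearMap.comp_apply,
      ContinuousLinearMap.coe_snd', D, this]
    split_ifs with hij
    · subst hij
      simp [(hwpos i).ne']
    · rw [lp.single_apply_ne _ _ _ hij]; simp
  · intro F v
    rw [Prod.norm_def, Prod.norm_def]
    refine max_le_max ?_ (PF_norm F _)
    refine ContinuousLinearMap.opNorm_le_bound _ (norm_nonneg _) fun y => ?_
    exact (PF_norm F _).trans (v.1.le_opNorm y)
  · intro F n
    have : (ContinuousLinearMap.compL ℝ (StrongDual ℝ E) L1 L1 (PF F))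
        ((J (a n)).smulRight (lp.single 1 n (1 : ℝ) : L1))
        = if n ∈ F then (J (a n)).smulRight (lp.single 1 n (1 : ℝ) : L1) else 0 := by
      refine ContinuousLinearMap.ext fun y => ?_
      have h1 : (ContinuousLinearMap.compL ℝ (StrongDual ℝ E) L1 L1 (PF F))
        ((J (a n)).smulRight (lp.single 1 n (1 : ℝ) : L1)) y
        = PF F (J (a n) y • (lp.single 1 n (1 : ℝ) : L1)) := rfl
      rw [h1, map_smul, PF_single]
      split_ifs <;> simp
    refine Prod.ext ?_ ?_
    · refine this.trans ?_
      split_ifs <;> rfl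
    · refine (PF_single F n (w n)).trans ?_
      split_ifs <;> rfl
  · intro n
    refine ContinuousLinearMap.ext fun y => ?_
    have h1 : lp.tsumCLM ℝ ℕ ℝ (lp.single 1 n (1 : ℝ) : L1) = 1 := by
      have : lp.tsumCLM ℝ ℕ ℝ (lp.single 1 n (1 : ℝ) : L1)
        = ∑' m, (lp.single 1 n (1 : ℝ) : L1) m := rfl
      rw [this, tsum_eq_single n]
      · simp
      · intro m hm
        exact lp.single_apply_ne _ _ _ hm
    change lp.tsumCLM ℝ ℕ ℝ (y (a n) • (lp.single 1 n (1 : ℝ) : L1)) = y (a n)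
    rw [map_smul, h1]; simp
  · intro x
    have h1 : Summable (fun n => b n x • (J (a n)).smulRight (lp.single 1 n (1 : ℝ) : L1)) := by
      refine (aux_summable_op _ (hsum x)).congr fun n => ?_
      refine ContinuousLinearMap.ext fun y => ?_
      simp [J, smul_smul]
    have h2 : Summable (fun n => b n x • (lp.single 1 n (w n) : L1)) := by
      refine Summable.of_norm_bounded (g := fun n => (1 / 2 : ℝ) ^ n * ‖x‖)
        (summable_geometric_two.mul_right _) fun n => ?_
      rw [norm_smul, lp.norm_single (by simp), Real.norm_of_nonneg (hwpos n).le]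
      have h3 := (b n).le_opNorm x
      calc ‖b n x‖ * w n ≤ ((1 + ‖b n‖) * ‖x‖) * w n := by
            gcongr
            nlinarith [norm_nonneg x]
        _ = (1 / 2 : ℝ) ^ n * ‖x‖ := by
            rw [hw]; field_simp
    exact (h1.hasSum.prodMk h2.hasSum).summable
end

section
/- There exists a separable Banach space B with a Schauder basis such that for every separable Banach space E: E has a Schauder frame if and only if E is isomorphic (via a continuous linear isomorphism with continuous inverse) to a closed complemented subspace of B. -/
open Filter Topology

universe u

theorem banach_mazur (E : Type u) [NormedAddCommGroup E] [NormedSpace ℝ E]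
    [TopologicalSpace.SeparableSpace E] :
    ∃ i : E →L[ℝ] C(ULift.{u} (ℕ → Bool), ℝ), ∀ x, ‖i x‖ = ‖x‖ := by
  let S : Set (WeakDual ℝ E) := WeakDual.toStrongDual ⁻¹' Metric.closedBall 0 1
  have hS : IsCompact S := WeakDual.isCompact_closedBall 0 1
  have : TopologicalSpace.MetrizableSpace S := WeakDual.metrizable_of_isCompact ℝ E S hS
  let : MetricSpace S := TopologicalSpace.metrizableSpaceMetric S
  have : CompactSpace S := isCompact_iff_compactSpace.mp hS
  have : Nonempty S := ⟨⟨0, by simp [S]⟩⟩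
  obtain ⟨g, hg, hgs⟩ := exists_nat_bool_continuous_surjective_of_compact S
  have hb : ∀ t, ∀ x : E, ‖(g t : WeakDual ℝ E) x‖ ≤ ‖x‖ := by
    intro t x
    have h1 : ‖WeakDual.toStrongDual (g t : WeakDual ℝ E)‖ ≤ 1 := by
      have := (g t).2
      simpa only [S, Set.mem_preimage, mem_closedBall_zero_iff] using this
    have h2 := (WeakDual.toStrongDual (g t : WeakDual ℝ E)).le_of_opNorm_le h1 x
    simpa using h2
  let L : E →ₗ[ℝ] C(ULift.{u} (ℕ → Bool), ℝ) :=
    { toFun := fun x => ⟨fun t => (g t.down : WeakDual ℝ E) x,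
        (WeakDual.eval_continuous x).comp (continuous_subtype_val.comp
          (hg.comp continuous_uliftDown))⟩
      map_add' := fun x y => by ext t; simp
      map_smul' := fun c x => by ext t; simp }
  have hL : ∀ x, ‖L x‖ ≤ 1 * ‖x‖ := fun x => by
    rw [one_mul, ContinuousMap.norm_le _ (norm_nonneg _)]
    exact fun t => hb _ _
  refine ⟨L.mkContinuous 1 hL, fun x => le_antisymm (by simpa using hL x) ?_⟩
  obtain ⟨f, hf, hfx⟩ := exists_dual_vector'' ℝ x
  obtain ⟨t, ht⟩ := hgs ⟨StrongDual.toWeakDual f, by simpa [S] using hf⟩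
  have := (L x).norm_coe_le_norm ⟨t⟩
  have h3 : (L x) ⟨t⟩ = ‖x‖ := by
    change (g t : WeakDual ℝ E) x = _
    rw [ht]; exact hfx
  rw [h3] at this
  simpa using this

theorem separable_CW : TopologicalSpace.SeparableSpace C(ULift.{u} (ℕ → Bool), ℝ) := by
  have : SecondCountableTopology (ULift.{u} (ℕ → Bool)) :=
    (Homeomorph.ulift (X := ℕ → Bool)).secondCountableTopology
  infer_instance

/-- A Banach space with a tree-indexed fundamental biorthogonal system. -/
structure TreeSpace (W B : Type u) [NormedAddCommGroup W] [NormedSpace ℝ W]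
    [NormedAddCommGroup B] [NormedSpace ℝ B] (D : ℕ → W) where
  e : List ℕ → B
  p : List ℕ → B →L[ℝ] W
  f : List ℕ → B →L[ℝ] ℝ
  dense : Dense (Submodule.span ℝ (Set.range e) : Set B)
  p_le : ∀ t z, ‖p t z‖ ≤ ‖z‖
  f_le : ∀ t z, ‖f t z‖ ≤ ‖z‖
  le_of : ∀ z C, 0 ≤ C → (∀ t, ‖p t z‖ ≤ C) → (∀ t, ‖f t z‖ ≤ C) → ‖z‖ ≤ C
  bio : ∀ s t, f s (e t) = if s = t then 1 else 0
  p_nil : ∀ z, p [] z = 0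
  p_cons : ∀ a l z, p (a :: l) z = p l z + f (a :: l) z • D a

section construction
variable {W : Type u} [NormedAddCommGroup W] [NormedSpace ℝ W]

def treeLab (D : ℕ → W) : List ℕ → W
  | [] => 0
  | a :: _ => D a

abbrev TreeAmb (W : Type u) [NormedAddCommGroup W] [NormedSpace ℝ W] :=
  lp (fun _ : List ℕ => W × ℝ) ⊤

open Classical in
noncomputable def treeVec (D : ℕ → W) (s : List ℕ) : TreeAmb W :=
  ⟨fun t => (if s <:+ t then treeLab D s else 0, if t = s then 1 else 0), by
    apply memℓp_infty
    refine ⟨max ‖treeLab D s‖ 1, ?_⟩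
    rintro _ ⟨t, rfl⟩
    refine max_le_max ?_ ?_
    · split_ifs <;> simp
    · split_ifs <;> simp⟩

theorem treeVec_fst (D : ℕ → W) (s t : List ℕ) [Decidable (s <:+ t)] :
    (treeVec D s t).1 = if s <:+ t then treeLab D s else 0 := by
  simp only [treeVec]; congr

theorem treeVec_snd (D : ℕ → W) (s t : List ℕ) :
    (treeVec D s t).2 = if t = s then 1 else 0 := by
  simp only [treeVec]

noncomputable def treeP (t : List ℕ) : TreeAmb W →L[ℝ] W :=
  (ContinuousLinearMap.fst ℝ W ℝ).comp (lp.evalCLM ℝ (fun _ : List ℕ => W × ℝ) ⊤ t)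

noncomputable def treeF (t : List ℕ) : TreeAmb W →L[ℝ] ℝ :=
  (ContinuousLinearMap.snd ℝ W ℝ).comp (lp.evalCLM ℝ (fun _ : List ℕ => W × ℝ) ⊤ t)

theorem treeP_apply (t : List ℕ) (z : TreeAmb W) : treeP t z = (z t).1 := rfl
theorem treeF_apply (t : List ℕ) (z : TreeAmb W) : treeF t z = (z t).2 := rfl

noncomputable def treeB (D : ℕ → W) : Submodule ℝ (TreeAmb W) :=
  (Submodule.span ℝ (Set.range (treeVec D))).topologicalClosure

theorem treeB_ind (D : ℕ → W) (T : TreeAmb W →L[ℝ] W) (h : ∀ s, T (treeVec D s) = 0)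
    (z : TreeAmb W) (hz : z ∈ treeB D) : T z = 0 := by
  have : treeB D ≤ LinearMap.ker (T : TreeAmb W →ₗ[ℝ] W) := by
    refine Submodule.topologicalClosure_minimal _ ?_ ?_
    · rw [Submodule.span_le]
      rintro _ ⟨s, rfl⟩
      exact h s
    · exact T.isClosed_ker
  exact this hz

noncomputable def treeB_space (D : ℕ → W) : TreeSpace W (treeB D) D where
  e s := ⟨treeVec D s, Submodule.le_topologicalClosure _ (Submodule.subset_span ⟨s, rfl⟩)⟩
  p t := (treeP t).comp (treeB D).subtypeL
  f t := (treeF t).comp (treeB D).subtypeL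
  dense := by
    rw [Subtype.dense_iff]
    intro x hx
    have h1 : x ∈ closure ((Submodule.span ℝ (Set.range (treeVec D)) : Submodule ℝ _) :
      Set (TreeAmb W)) := hx
    refine closure_mono ?_ h1
    have : Submodule.span ℝ (Set.range (treeVec D)) ≤ (Submodule.span ℝ (Set.range (fun s => (⟨treeVec D s, Submodule.le_topologicalClosure _ (Submodule.subset_span ⟨s, rfl⟩)⟩ : treeB D)))).map (treeB D).subtype := by
      rw [Submodule.span_le]
      rintro _ ⟨s, rfl⟩
      exact ⟨_, Submodule.subset_span ⟨s, rfl⟩, rfl⟩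
    intro y hy
    exact this hy
  p_le t z := (le_max_left _ _).trans (lp.norm_apply_le_norm ENNReal.top_ne_zero (z : TreeAmb W) t)
  f_le t z := (le_max_right _ _).trans (lp.norm_apply_le_norm ENNReal.top_ne_zero (z : TreeAmb W) t)
  le_of z C hC h1 h2 := lp.norm_le_of_forall_le (f := (z : TreeAmb W)) hC
    fun t => max_le (h1 t) (h2 t)
  bio s t := by
    change (treeVec D t s).2 = _
    rw [treeVec_snd]
  p_nil z := by
    refine treeB_ind D (treeP []) ?_ z z.2
    intro s
    classical
    rw [treeP_apply, treeVec_fst]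
    cases s <;> simp [treeLab]
  p_cons a l z := by
    have := treeB_ind D (treeP (a :: l) - treeP l - (treeF (a :: l)).smulRight (D a)) ?_ z z.2
    · change treeP (a :: l) (z : TreeAmb W) = treeP l (z : TreeAmb W) +
        treeF (a :: l) (z : TreeAmb W) • D a
      simp only [sub_apply, ContinuousLinearMap.smulRight_apply] at this
      rw [sub_sub, sub_eq_zero] at this
      exact this
    · intro s
      classical
      simp only [sub_apply, ContinuousLinearMap.smulRight_apply, treeP_apply,
        treeF_apply, treeVec_fst, treeVec_snd, List.suffix_cons_iff]
      by_cases h : s = a :: l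
      · subst h
        have : ¬ (a :: l <:+ l) := fun h => by have := h.length_le; simp at this
        simp [this, treeLab]
      · simp [h, Ne.symm h]

end construction

theorem cauchy_of_dense {X Y : Type*} [NormedAddCommGroup X] [NormedSpace ℝ X]
    [NormedAddCommGroup Y] [NormedSpace ℝ Y] (S : ℕ → X →L[ℝ] Y) (C : ℝ) (hC0 : 0 ≤ C)
    (hC : ∀ n z, ‖S n z‖ ≤ C * ‖z‖) (A : Set X)
    (hd : Dense (Submodule.span ℝ A : Set X)) (h : ∀ x ∈ A, CauchySeq (fun n => S n x)) (z : X) :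
    CauchySeq (fun n => S n z) := by
  have hs : ∀ y ∈ Submodule.span ℝ A, CauchySeq (fun n => S n y) := by
    intro y hy
    induction hy using Submodule.span_induction with
    | mem x hx => exact h x hx
    | zero => simpa using cauchySeq_const (0 : Y)
    | add x y _ _ hx hy => simpa using! hx.add hy
    | smul c x _ hx =>
      simpa [Function.comp_def] using (uniformContinuous_const_smul c).comp_cauchySeq hx
  rw [Metric.cauchySeq_iff]
  intro ε hε
  obtain ⟨y, hy, hyz⟩ := Metric.dense_iff.1 hd z (ε / (3 * (C + 1))) (by positivity)
  obtain ⟨N, hN⟩ := Metric.cauchySeq_iff.1 (hs y hyz) (ε / 3) (by positivity)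
  have hb : ∀ n, ‖S n z - S n y‖ < ε / 3 := by
    intro n
    rw [← map_sub]
    have h1 : ‖z - y‖ < ε / (3 * (C + 1)) := by
      rw [Metric.mem_ball, dist_comm, dist_eq_norm] at hy; exact hy
    have h2 := hC n (z - y)
    have h3 : (C + 1) * ‖z - y‖ < ε / 3 := by
      rw [lt_div_iff₀ (by positivity)] at h1
      linarith
    nlinarith [norm_nonneg (z - y)]
  refine ⟨N, fun m hm n hn => ?_⟩
  have h1 := hb m
  have h2 := hb n
  have h3 := hN m hm n hn
  rw [← dist_eq_norm] at h1 h2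
  rw [dist_comm] at h2
  linarith [dist_triangle4 (S m z) (S m y) (S n y) (S n z)]

theorem tendsto_clm {X Y : Type*} [NormedAddCommGroup X] [NormedSpace ℝ X] [CompleteSpace X]
    [NormedAddCommGroup Y] [NormedSpace ℝ Y] [CompleteSpace Y] (S : ℕ → X →L[ℝ] Y)
    (h : ∀ z, CauchySeq (fun n => S n z)) :
    ∃ R : X →L[ℝ] Y, ∀ z, Tendsto (fun n => S n z) atTop (𝓝 (R z)) := by
  choose g hg using fun z => cauchySeq_tendsto_of_complete (h z)
  refine ⟨continuousLinearMapOfTendsto S (f := g) (tendsto_pi_nhds.2 hg), hg⟩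

namespace TreeSpace
variable {W B : Type u} [NormedAddCommGroup W] [NormedSpace ℝ W]
    [NormedAddCommGroup B] [NormedSpace ℝ B] {D : ℕ → W} (T : TreeSpace W B D)

theorem separable (T : TreeSpace W B D) : TopologicalSpace.SeparableSpace B := by
  have h : TopologicalSpace.IsSeparable (closure (Submodule.span ℝ (Set.range T.e) : Set B)) :=
    ((Set.countable_range T.e).isSeparable.span (R := ℝ)).closure
  rw [T.dense.closure_eq] at h
  exact TopologicalSpace.isSeparable_univ_iff.1 h

noncomputable def partialSum (N : ℕ) : B →L[ℝ] B :=
  ∑ j ∈ Finset.range N, (T.f (Denumerable.ofNat (List ℕ) j)).smulRight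
    (T.e (Denumerable.ofNat (List ℕ) j))

theorem partialSum_apply (N : ℕ) (z : B) : T.partialSum N z = ∑ j ∈ Finset.range N,
    T.f (Denumerable.ofNat (List ℕ) j) z • T.e (Denumerable.ofNat (List ℕ) j) := by
  simp [partialSum]

theorem ofNat_eq_iff (s : List ℕ) (j : ℕ) :
    s = Denumerable.ofNat (List ℕ) j ↔ Encodable.encode s = j := by
  constructor
  · rintro rfl; simp
  · rintro rfl; simp

theorem f_partialSum (N : ℕ) (z : B) (s : List ℕ) :
    T.f s (T.partialSum N z) = if Encodable.encode s < N then T.f s z else 0 := by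
  rw [partialSum_apply]
  simp only [map_sum, map_smul, T.bio, ofNat_eq_iff, smul_eq_mul, mul_ite, mul_one, mul_zero,
    Finset.sum_ite_eq, Finset.mem_range, Denumerable.ofNat_encode]

theorem encode_tail_lt (a : ℕ) (l : List ℕ) :
    Encodable.encode l < Encodable.encode (a :: l) := by
  rw [Encodable.encode_list_cons]
  exact Nat.lt_succ_of_le (Nat.right_le_pair _ _)

theorem p_partialSum (N : ℕ) (z : B) (s : List ℕ) (h : Encodable.encode s < N) :
    T.p s (T.partialSum N z) = T.p s z := by
  induction s with
  | nil => simp [T.p_nil]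
  | cons a l ih =>
    rw [T.p_cons, T.p_cons, f_partialSum, if_pos h, ih ((encode_tail_lt a l).trans h)]

theorem norm_partialSum_le (N : ℕ) (z : B) : ‖T.partialSum N z‖ ≤ ‖z‖ := by
  refine T.le_of _ _ (norm_nonneg _) ?_ ?_
  · intro t
    induction t with
    | nil => simp [T.p_nil]
    | cons a l ih =>
      by_cases h : Encodable.encode (a :: l) < N
      · rw [T.p_partialSum _ _ _ h]; exact T.p_le _ _
      · rw [T.p_cons, f_partialSum, if_neg h]; simpa using ih
  · intro t
    rw [f_partialSum]
    split_ifs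
    · exact T.f_le _ _
    · simp

theorem f_sum_ext (z : B) (h : ∀ t, T.f t z = 0) : z = 0 := by
  rw [← norm_le_zero_iff]
  refine T.le_of _ _ le_rfl ?_ ?_
  · intro t
    induction t with
    | nil => simp [T.p_nil]
    | cons a l ih => rw [T.p_cons, h]; simpa using ih
  · simp [h]

theorem tendsto_partialSum [CompleteSpace B] (z : B) :
    Tendsto (fun N => T.partialSum N z) atTop (𝓝 z) := by
  have h : ∀ z, CauchySeq (fun N => T.partialSum N z) := by
    refine cauchy_of_dense T.partialSum 1 zero_le_one
      (fun n z => by simpa using T.norm_partialSum_le n z) _ T.dense ?_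
    rintro _ ⟨s, rfl⟩
    refine Tendsto.cauchySeq (x := T.e s) (tendsto_atTop_of_eventually_const
      (i₀ := Encodable.encode s + 1) ?_)
    intro N hN
    rw [← sub_eq_zero]
    refine T.f_sum_ext _ fun t => ?_
    rw [map_sub, f_partialSum, T.bio]
    by_cases hts : t = s
    · subst hts; rw [if_pos (by omega)]; simp
    · simp [hts]
  obtain ⟨R, hR⟩ := tendsto_clm T.partialSum h
  have : R z = z := by
    rw [← sub_eq_zero]
    refine T.f_sum_ext _ fun t => ?_
    rw [map_sub, sub_eq_zero]
    refine tendsto_nhds_unique (((T.f t).continuous.tendsto _).comp (hR z))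
      (tendsto_atTop_of_eventually_const (i₀ := Encodable.encode t + 1) ?_)
    intro N hN
    rw [Function.comp_apply, f_partialSum, if_pos (by omega)]
  have h3 := hR z
  rwa [this] at h3

theorem hasBasis (T : TreeSpace W B D) [CompleteSpace B] : HasSchauderBasis B := by
  refine ⟨fun n => T.e (Denumerable.ofNat (List ℕ) n), fun n => T.f (Denumerable.ofNat _ n), ?_, ?_⟩
  · intro i j
    rw [T.bio]
    simp [ofNat_eq_iff]
  · intro z
    simpa only [partialSum_apply] using T.tendsto_partialSum z

theorem frame_of_complemented (T : TreeSpace W B D) [CompleteSpace B] {E : Type*} [NormedAddCommGroup E]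
    [NormedSpace ℝ E] (F : Submodule ℝ B) (P : B →L[ℝ] B) (hP : ∀ z, P (P z) = P z)
    (hr : LinearMap.range (P : B →ₗ[ℝ] B) = F) (φ : E ≃L[ℝ] F) :
    ∃ (a : ℕ → E) (b : ℕ → E →L[ℝ] ℝ), IsSchauderFrame a b := by
  have hm : ∀ z, P z ∈ F := fun z => hr ▸ ⟨z, rfl⟩
  let Q : B →L[ℝ] E := (φ.symm : F →L[ℝ] E).comp (P.codRestrict F hm)
  have hQ : ∀ x, Q (φ x) = x := by
    intro x
    have h1 : ((φ x : F) : B) ∈ LinearMap.range (P : B →ₗ[ℝ] B) := hr ▸ (φ x).2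
    obtain ⟨w, hw⟩ := h1
    have h2 : P.codRestrict F hm (φ x) = φ x := by
      apply Subtype.ext
      change P (φ x) = φ x
      rw [← hw]; exact hP w
    change φ.symm (P.codRestrict F hm (φ x)) = x
    rw [h2]; simp
  refine ⟨fun n => Q (T.e (Denumerable.ofNat (List ℕ) n)),
    fun n => (T.f (Denumerable.ofNat _ n)).comp (F.subtypeL.comp (φ : E →L[ℝ] F)), ?_⟩
  intro x
  have h := (Q.continuous.tendsto _).comp (T.tendsto_partialSum (φ x))
  rw [hQ] at h
  refine h.congr fun n => ?_
  simp [partialSum_apply]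

def br (k : ℕ → ℕ) : ℕ → List ℕ
  | 0 => []
  | n + 1 => k n :: br k n

theorem br_length (k : ℕ → ℕ) (n : ℕ) : (br k n).length = n := by
  induction n with
  | zero => rfl
  | succ n ih => simp [br, ih]

theorem br_inj (k : ℕ → ℕ) {m n : ℕ} : br k m = br k n ↔ m = n := by
  constructor
  · intro h
    have := congrArg List.length h
    simpa [br_length] using this
  · rintro rfl; rfl

theorem p_br (k : ℕ → ℕ) (m : ℕ) (z : B) :
    T.p (br k m) z = ∑ n ∈ Finset.range m, T.f (br k (n + 1)) z • D (k n) := by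
  induction m with
  | zero => simp [br, T.p_nil]
  | succ m ih =>
    rw [Finset.sum_range_succ, ← ih]
    exact T.p_cons _ _ _

theorem norm_le_branch (k : ℕ → ℕ) (y : B) (C : ℝ) (hC : 0 ≤ C)
    (h0 : ∀ t, (∀ n, t ≠ br k (n + 1)) → T.f t y = 0)
    (h1 : ∀ m, ‖T.p (br k m) y‖ ≤ C) (h2 : ∀ n, ‖T.f (br k (n + 1)) y‖ ≤ C) : ‖y‖ ≤ C := by
  refine T.le_of _ _ hC ?_ ?_
  · intro t
    induction t with
    | nil => simpa [T.p_nil] using hC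
    | cons a l ih =>
      by_cases h : ∃ n, a :: l = br k (n + 1)
      · obtain ⟨n, hn⟩ := h
        rw [hn]; exact h1 _
      · push Not at h
        rw [T.p_cons, h0 _ h]
        simpa using ih
  · intro t
    by_cases h : ∃ n, t = br k (n + 1)
    · obtain ⟨n, hn⟩ := h
      rw [hn]; exact h2 _
    · push Not at h
      rw [h0 _ h]; simpa using hC

section forward
variable {E : Type*} [NormedAddCommGroup E] [NormedSpace ℝ E]

noncomputable def jn (k : ℕ → ℕ) (b : ℕ → E →L[ℝ] ℝ) (N : ℕ) : E →L[ℝ] B :=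
  ∑ n ∈ Finset.range N, (b n).smulRight (T.e (br k (n + 1)))

noncomputable def qn (k : ℕ → ℕ) (a : ℕ → E) (N : ℕ) : B →L[ℝ] E :=
  ∑ n ∈ Finset.range N, (T.f (br k (n + 1))).smulRight (a n)

theorem jn_apply (k : ℕ → ℕ) (b : ℕ → E →L[ℝ] ℝ) (N : ℕ) (x : E) :
    T.jn k b N x = ∑ n ∈ Finset.range N, b n x • T.e (br k (n + 1)) := by
  simp [jn]

theorem qn_apply (k : ℕ → ℕ) (a : ℕ → E) (N : ℕ) (z : B) :
    T.qn k a N z = ∑ n ∈ Finset.range N, T.f (br k (n + 1)) z • a n := by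
  simp [qn]

theorem f_jn (k : ℕ → ℕ) (b : ℕ → E →L[ℝ] ℝ) (N n : ℕ) (x : E) :
    T.f (br k (n + 1)) (T.jn k b N x) = if n < N then b n x else 0 := by
  simp only [jn_apply, map_sum, map_smul, T.bio, br_inj, smul_eq_mul, mul_ite, mul_one, mul_zero,
    add_left_inj, Finset.sum_ite_eq, Finset.mem_range]

theorem f_jn_off (k : ℕ → ℕ) (b : ℕ → E →L[ℝ] ℝ) (N : ℕ) (x : E) (t : List ℕ)
    (ht : ∀ n, t ≠ br k (n + 1)) : T.f t (T.jn k b N x) = 0 := by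
  simp [jn_apply, map_sum, map_smul, T.bio, ht]

theorem p_jn (k : ℕ → ℕ) (b : ℕ → E →L[ℝ] ℝ) (N m : ℕ) (x : E) :
    T.p (br k m) (T.jn k b N x) = ∑ n ∈ Finset.range (min m N), b n x • D (k n) := by
  rw [p_br]
  simp only [f_jn, ite_smul, zero_smul]
  rw [← Finset.sum_filter]
  congr 1
  ext n
  simp

theorem cauchy_jn (k : ℕ → ℕ) (b : ℕ → E →L[ℝ] ℝ) (x : E)
    (h1 : CauchySeq (fun N => ∑ n ∈ Finset.range N, b n x • D (k n)))
    (h2 : Tendsto (fun n => b n x) atTop (𝓝 0)) : CauchySeq (fun N => T.jn k b N x) := by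
  rw [Metric.cauchySeq_iff]
  intro ε hε
  obtain ⟨N1, hN1⟩ := Metric.cauchySeq_iff.1 h1 (ε / 2) (by positivity)
  obtain ⟨N2, hN2⟩ := Metric.tendsto_atTop.1 h2 (ε / 2) (by positivity)
  refine ⟨max N1 N2, fun M hM N hN => ?_⟩
  have hM1 : N1 ≤ M := (le_max_left _ _).trans hM
  have hM2 : N2 ≤ M := (le_max_right _ _).trans hM
  have hN1' : N1 ≤ N := (le_max_left _ _).trans hN
  have hN2' : N2 ≤ N := (le_max_right _ _).trans hN
  rw [dist_eq_norm]
  refine lt_of_le_of_lt (T.norm_le_branch k _ (ε / 2) (by positivity) ?_ ?_ ?_) (half_lt_self hε)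
  · intro t ht
    rw [map_sub, f_jn_off _ _ _ _ _ _ ht, f_jn_off _ _ _ _ _ _ ht, sub_zero]
  · intro m
    rw [map_sub, p_jn, p_jn]
    by_cases hm : N1 ≤ m
    · rw [← dist_eq_norm]
      exact (hN1 _ (le_min hm hM1) _ (le_min hm hN1')).le
    · rw [min_eq_left (by omega), min_eq_left (by omega), sub_self, norm_zero]
      positivity
  · intro n
    rw [map_sub, f_jn, f_jn]
    by_cases hn : N2 ≤ n
    · have := (hN2 n hn).le
      rw [dist_zero_right] at this
      split_ifs
      · rw [sub_self, norm_zero]; positivity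
      · simpa using this
      · simpa using this
      · rw [sub_self, norm_zero]; positivity
    · rw [if_pos (by omega), if_pos (by omega), sub_self, norm_zero]
      positivity

theorem norm_qn_le (k : ℕ → ℕ) (a : ℕ → E) (i : E →L[ℝ] W) (hi : ∀ x, ‖i x‖ = ‖x‖)
    (hk : ∀ n, ‖i (a n) - D (k n)‖ ≤ (1 / 2) ^ n) (N : ℕ) (z : B) :
    ‖T.qn k a N z‖ ≤ 3 * ‖z‖ := by
  have h1 : i (T.qn k a N z) = T.p (br k N) z +
      ∑ n ∈ Finset.range N, T.f (br k (n + 1)) z • (i (a n) - D (k n)) := by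
    rw [p_br, qn_apply, ← Finset.sum_add_distrib, map_sum]
    refine Finset.sum_congr rfl fun n _ => ?_
    rw [map_smul, smul_sub]; abel
  have h2 : ‖∑ n ∈ Finset.range N, T.f (br k (n + 1)) z • (i (a n) - D (k n))‖ ≤ ‖z‖ * 2 := by
    calc _ ≤ ∑ n ∈ Finset.range N, ‖z‖ * (1 / 2) ^ n := by
          refine norm_sum_le_of_le _ fun n _ => ?_
          rw [norm_smul]
          exact mul_le_mul (T.f_le _ _) (hk n) (norm_nonneg _) (norm_nonneg _)
      _ = ‖z‖ * ∑ n ∈ Finset.range N, (1 / 2) ^ n := by rw [Finset.mul_sum]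
      _ ≤ ‖z‖ * 2 := by
          gcongr
          exact sum_geometric_two_le N
  rw [← hi, h1]
  have := norm_add_le (T.p (br k N) z)
    (∑ n ∈ Finset.range N, T.f (br k (n + 1)) z • (i (a n) - D (k n)))
  linarith [T.p_le (br k N) z]

theorem cauchy_qn (k : ℕ → ℕ) (a : ℕ → E) (i : E →L[ℝ] W) (hi : ∀ x, ‖i x‖ = ‖x‖)
    (hk : ∀ n, ‖i (a n) - D (k n)‖ ≤ (1 / 2) ^ n) (z : B) :
    CauchySeq (fun N => T.qn k a N z) := by
  refine cauchy_of_dense (T.qn k a) 3 (by norm_num) (T.norm_qn_le k a i hi hk) _ T.dense ?_ z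
  rintro _ ⟨s, rfl⟩
  refine Tendsto.cauchySeq (x := T.qn k a s.length (T.e s)) (tendsto_atTop_of_eventually_const
    (i₀ := s.length) ?_)
  intro N hN
  induction N, hN using Nat.le_induction with
  | base => rfl
  | succ N hN ih =>
    rw [← ih, qn_apply, qn_apply, Finset.sum_range_succ, T.bio, if_neg, zero_smul, add_zero]
    intro h
    have := congrArg List.length h
    rw [br_length] at this
    omega

theorem exists_JQ (T : TreeSpace W B D) [CompleteSpace B] [CompleteSpace E] (hD : DenseRange D)
    (i : E →L[ℝ] W) (hi : ∀ x, ‖i x‖ = ‖x‖) (a : ℕ → E) (b : ℕ → E →L[ℝ] ℝ)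
    (hab : IsSchauderFrame a b) (hb : ∀ n, ‖b n‖ ≤ (1 / 2) ^ n) :
    ∃ (J : E →L[ℝ] B) (Q : B →L[ℝ] E), ∀ x, Q (J x) = x := by
  have hk : ∀ n, ∃ k, ‖i (a n) - D k‖ ≤ (1 / 2) ^ n := by
    intro n
    obtain ⟨k, hk⟩ := hD.exists_dist_lt (i (a n)) (ε := (1 / 2) ^ n) (by positivity)
    exact ⟨k, by rw [← dist_eq_norm]; exact hk.le⟩
  choose k hk using hk
  have hbx : ∀ x n, ‖b n x‖ ≤ (1 / 2) ^ n * ‖x‖ := fun x n => (b n).le_of_opNorm_le (hb n) x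
  have hgeo : Tendsto (fun n : ℕ => ((1 : ℝ) / 2) ^ n) atTop (𝓝 0) :=
    tendsto_pow_atTop_nhds_zero_of_lt_one (by norm_num) (by norm_num)
  have hJ : ∀ x, CauchySeq (fun N => T.jn k b N x) := by
    intro x
    refine T.cauchy_jn k b x ?_ ?_
    · have c1 : CauchySeq (fun N => ∑ n ∈ Finset.range N, b n x • i (a n)) := by
        have := ((i.continuous.tendsto _).comp (hab x)).cauchySeq
        simpa [Function.comp_def] using this
      have c2 : CauchySeq (fun N => ∑ n ∈ Finset.range N, b n x • (D (k n) - i (a n))) := by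
        refine cauchySeq_range_of_norm_bounded (g := fun n => (1 / 2) ^ n * ‖x‖) ?_ ?_
        · exact (HasSum.tendsto_sum_nat
            ((summable_geometric_two).mul_right ‖x‖).hasSum).cauchySeq
        · intro n
          rw [norm_smul, norm_sub_rev]
          calc _ ≤ ((1 / 2) ^ n * ‖x‖) * 1 :=
                mul_le_mul (hbx x n) ((hk n).trans (pow_le_one₀ (by norm_num) (by norm_num)))
                  (norm_nonneg _) (by positivity)
            _ = _ := mul_one _
      have := c1.add c2
      convert this using 2 with N
      simp only [Pi.add_apply]
      rw [← Finset.sum_add_distrib]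
      refine Finset.sum_congr rfl fun n _ => ?_
      rw [smul_sub]; abel
    · refine squeeze_zero_norm (hbx x) ?_
      simpa using hgeo.mul_const ‖x‖
  obtain ⟨J, hJ⟩ := tendsto_clm _ hJ
  obtain ⟨Q, hQ⟩ := tendsto_clm _ (T.cauchy_qn k a i hi hk)
  refine ⟨J, Q, fun x => ?_⟩
  have hf : ∀ n, T.f (br k (n + 1)) (J x) = b n x := by
    intro n
    refine tendsto_nhds_unique (((T.f _).continuous.tendsto _).comp (hJ x))
      (tendsto_atTop_of_eventually_const (i₀ := n + 1) ?_)
    intro N hN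
    rw [Function.comp_apply, f_jn, if_pos (by omega)]
  refine tendsto_nhds_unique (hQ (J x)) ?_
  simpa only [qn_apply, hf] using hab x

theorem exists_JQ' (T : TreeSpace W B D) [CompleteSpace B] [CompleteSpace E] (hD : DenseRange D)
    (i : E →L[ℝ] W) (hi : ∀ x, ‖i x‖ = ‖x‖) (a : ℕ → E) (b : ℕ → E →L[ℝ] ℝ)
    (hab : IsSchauderFrame a b) :
    ∃ (J : E →L[ℝ] B) (Q : B →L[ℝ] E), ∀ x, Q (J x) = x := by
  have hpos : ∀ n, 0 < 2 ^ n * (‖b n‖ + 1) := fun n => by positivity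
  refine T.exists_JQ hD i hi (fun n => (2 ^ n * (‖b n‖ + 1)) • a n)
    (fun n => (2 ^ n * (‖b n‖ + 1))⁻¹ • b n) ?_ ?_
  · intro x
    refine (hab x).congr fun N => Finset.sum_congr rfl fun n _ => ?_
    have := (hpos n).ne'
    simp only [ContinuousLinearMap.smul_apply, smul_smul, smul_eq_mul]
    congr 1
    field_simp
  · intro n
    rw [norm_smul, norm_inv, Real.norm_of_nonneg (hpos n).le, inv_mul_le_iff₀ (hpos n)]
    have : (2 : ℝ) ^ n * (‖b n‖ + 1) * (1 / 2) ^ n = ‖b n‖ + 1 := by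
      rw [mul_right_comm, ← mul_pow]; norm_num
    rw [this]; linarith

end forward
end TreeSpace

theorem complemented_of_JQ {B E : Type*} [NormedAddCommGroup B] [NormedSpace ℝ B]
    [NormedAddCommGroup E] [NormedSpace ℝ E] (J : E →L[ℝ] B) (Q : B →L[ℝ] E)
    (h : ∀ x, Q (J x) = x) :
    ∃ F : Submodule ℝ B, IsClosed (F : Set B) ∧
          (∃ P : B →L[ℝ] B, (∀ z, P (P z) = P z) ∧
            LinearMap.range (P : B →ₗ[ℝ] B) = F) ∧
          Nonempty (E ≃L[ℝ] F) := by
  let P : B →L[ℝ] B := J.comp Q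
  have hP : ∀ z, P (P z) = P z := fun z => by simp [P, h]
  have hm : ∀ x, J x ∈ LinearMap.range (P : B →ₗ[ℝ] B) := fun x => ⟨J x, by simp [P, h]⟩
  refine ⟨LinearMap.range (P : B →ₗ[ℝ] B), ?_, ⟨P, hP, rfl⟩, ⟨?_⟩⟩
  · have : ((LinearMap.range (P : B →ₗ[ℝ] B) : Submodule ℝ B) : Set B) = {z | P z = z} := by
      ext z
      constructor
      · rintro ⟨w, rfl⟩; exact hP w
      · intro hz; exact ⟨z, hz⟩
    rw [this]
    exact isClosed_eq P.continuous continuous_id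
  · refine ContinuousLinearEquiv.equivOfInverse (J.codRestrict _ hm)
      (Q.comp (Submodule.subtypeL _)) ?_ ?_
    · intro x; simp [h]
    · rintro ⟨_, w, rfl⟩
      apply Subtype.ext
      exact hP w

/-- There exists a separable Banach space `B` with a Schauder basis such that a
separable Banach space `E` has a Schauder frame if and only if `E` is isomorphic,
via a continuous linear isomorphism, to a closed complemented subspace of `B`. -/
theorem exists_universal_space_for_schauderFrames :
    ∃ B : BanachSpace.{u}, TopologicalSpace.SeparableSpace B.X ∧ HasSchauderBasis B.X ∧
      ∀ (E : Type u) [NormedAddCommGroup E] [NormedSpace ℝ E] [CompleteSpace E]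
        [TopologicalSpace.SeparableSpace E],
        (∃ (a : ℕ → E) (b : ℕ → E →L[ℝ] ℝ), IsSchauderFrame a b) ↔
        ∃ F : Submodule ℝ B.X, IsClosed (F : Set B.X) ∧
          (∃ P : B.X →L[ℝ] B.X, (∀ z, P (P z) = P z) ∧
            LinearMap.range (P : B.X →ₗ[ℝ] B.X) = F) ∧
          Nonempty (E ≃L[ℝ] F) := by
  have hsep := separable_CW.{u}
  let W := C(ULift.{u} (ℕ → Bool), ℝ)
  let D : ℕ → W := TopologicalSpace.denseSeq W
  have hD : DenseRange D := TopologicalSpace.denseRange_denseSeq W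
  have hc : CompleteSpace (treeB D) :=
    (Submodule.isClosed_topologicalClosure _).completeSpace_coe
  let T := treeB_space D
  refine ⟨⟨treeB D⟩, T.separable, T.hasBasis, ?_⟩
  intro E _ _ _ _
  constructor
  · rintro ⟨a, b, hab⟩
    obtain ⟨i, hi⟩ := banach_mazur E
    obtain ⟨J, Q, h⟩ := T.exists_JQ' hD i hi a b hab
    exact complemented_of_JQ J Q h
  · rintro ⟨F, _, ⟨P, hP, hr⟩, ⟨φ⟩⟩
    exact T.frame_of_complemented F P hP hr φ
end

section
/- There exists a separable Banach space U with an unconditional Schauder basis such that every weakly sequentially complete separable Banach space E having a besselian Schauder frame is isomorphic (via a continuous linear isomorphism with continuous inverse) to a closed complemented subspace of U. -/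
open Filter Topology

universe u

open TopologicalSpace

theorem orlicz_pettis_aux {E : Type*} [NormedAddCommGroup E] [NormedSpace ℝ E]
    [SeparableSpace E] (hE : WeaklySequentiallyComplete E) (v : ℕ → E)
    (hv : ∀ y : E →L[ℝ] ℝ, Summable fun n => |y (v n)|) :
    ∀ ε > 0, ∃ s : Finset ℕ, ∀ t : Finset ℕ, Disjoint t s → ‖∑ i ∈ t, v i‖ < ε := by
  classical
  have hsm : ∀ (A : ℕ → Bool) (y : E →L[ℝ] ℝ),
      Summable fun n => if A n = true then y (v n) else 0 := by
    intro A y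
    refine Summable.of_norm_bounded (hv y) ?_
    intro n
    split_ifs <;> simp
  have hs : ∀ A : ℕ → Bool, ∃ x : E, ∀ y : E →L[ℝ] ℝ,
      y x = ∑' n, if A n = true then y (v n) else 0 := by
    intro A
    have key : ∀ y : E →L[ℝ] ℝ,
        Tendsto (fun N => y (∑ n ∈ Finset.range N, if A n = true then v n else 0)) atTop
          (𝓝 (∑' n, if A n = true then y (v n) else 0)) := by
      intro y
      have := (hsm A y).hasSum.tendsto_sum_nat
      refine this.congr fun N => ?_
      rw [map_sum]
      refine Finset.sum_congr rfl fun n _ => ?_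
      split_ifs <;> simp
    obtain ⟨x, hx⟩ := hE _ fun y => ⟨_, key y⟩
    exact ⟨x, fun y => tendsto_nhds_unique (hx y) (key y)⟩
  choose s hs using hs
  intro ε hε
  have hcont : ∀ y : E →L[ℝ] ℝ, Continuous fun A => y (s A) := by
    intro y
    simp_rw [hs]
    refine continuous_tsum (u := fun n => |y (v n)|) ?_ (hv y) ?_
    · intro n
      exact (continuous_of_discreteTopology (f := fun b : Bool => if b = true then y (v n) else 0)).comp
        (continuous_apply n)
    · intro n A
      split_ifs <;> simp
  have hclosed : ∀ c : E, IsClosed {A | ‖s A - c‖ ≤ ε / 3} := by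
    intro c
    have : {A | ‖s A - c‖ ≤ ε / 3} =
        ⋂ (y : E →L[ℝ] ℝ), {A | |y (s A) - y c| ≤ ε / 3 * ‖y‖} := by
      ext A
      simp only [Set.mem_ofPred_eq, Set.mem_iInter]
      constructor
      · intro h y
        rw [← map_sub]
        calc |y (s A - c)| ≤ ‖y‖ * ‖s A - c‖ := y.le_opNorm _
          _ ≤ ε / 3 * ‖y‖ := by rw [mul_comm]; gcongr
      · intro h
        refine NormedSpace.norm_le_dual_bound ℝ _ (by positivity) fun y => ?_
        rw [map_sub]
        exact h y
    rw [this]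
    refine isClosed_iInter fun y => ?_
    exact isClosed_le (((hcont y).sub continuous_const).abs) continuous_const
  obtain ⟨i, hi⟩ := nonempty_interior_of_iUnion_of_closed
    (f := fun i : ℕ => {A | ‖s A - denseSeq E i‖ ≤ ε / 3}) (fun i => hclosed _) (by
      refine Set.eq_univ_of_forall fun A => ?_
      obtain ⟨i, hi⟩ := (denseRange_denseSeq E).exists_dist_lt (s A) (ε := ε / 3) (by positivity)
      rw [dist_eq_norm] at hi
      exact Set.mem_iUnion.2 ⟨i, hi.le⟩)
  obtain ⟨A, hA⟩ := hi
  rw [mem_interior_iff_mem_nhds, nhds_pi, Filter.mem_pi] at hA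
  obtain ⟨I, hI, t, ht, hsub⟩ := hA
  refine ⟨hI.toFinset, fun F hF => ?_⟩
  let A1 : ℕ → Bool := fun n => if n ∈ F then true else A n
  let A0 : ℕ → Bool := fun n => if n ∈ F then false else A n
  have hFI : ∀ n ∈ I, n ∉ F := fun n hn hnF =>
    Finset.disjoint_left.1 hF hnF (hI.mem_toFinset.2 hn)
  have h1 : ‖s A1 - denseSeq E i‖ ≤ ε / 3 := hsub (by
    intro n hn
    simp only [A1, hFI n hn, if_false]
    exact mem_of_mem_nhds (ht n))
  have h0 : ‖s A0 - denseSeq E i‖ ≤ ε / 3 := hsub (by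
    intro n hn
    simp only [A0, hFI n hn, if_false]
    exact mem_of_mem_nhds (ht n))
  have hdiff : ∑ i ∈ F, v i = s A1 - s A0 := by
    rw [← sub_eq_zero]
    by_contra hne
    obtain ⟨y, -, hy⟩ := exists_dual_vector ℝ _ (norm_ne_zero_iff.2 hne)
    have : y (∑ i ∈ F, v i - (s A1 - s A0)) = 0 := by
      rw [map_sub, map_sub, hs, hs, ← (hsm A1 y).tsum_sub (hsm A0 y), map_sum,
        tsum_eq_sum (s := F)]
      · rw [← Finset.sum_sub_distrib]
        refine Finset.sum_eq_zero fun n hn => ?_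
        simp [A1, A0, hn]
      · intro n hn
        simp [A1, A0, hn]
    rw [hy] at this
    simp at this
    exact hne this
  rw [hdiff]
  have : s A1 - s A0 = (s A1 - denseSeq E i) - (s A0 - denseSeq E i) := by abel
  rw [this]
  calc _ ≤ _ := norm_sub_le _ _
    _ ≤ ε / 3 + ε / 3 := add_le_add h1 h0
    _ < ε := by linarith

theorem banach_mazur_cantor (E : Type*) [NormedAddCommGroup E] [NormedSpace ℝ E]
    [SeparableSpace E] : Nonempty (E →ₗᵢ[ℝ] C(ℕ → Bool, ℝ)) := by
  let K : Set (WeakDual ℝ E) := WeakDual.toStrongDual ⁻¹' Metric.closedBall 0 1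
  have hK : IsCompact K := WeakDual.isCompact_closedBall _ _
  have : CompactSpace K := isCompact_iff_compactSpace.1 hK
  have : MetrizableSpace K := WeakDual.metrizable_of_isCompact ℝ E K hK
  let : MetricSpace K := metrizableSpaceMetric K
  have : Nonempty K := ⟨⟨0, by simp [K]⟩⟩
  obtain ⟨c, hc, hcs⟩ := exists_nat_bool_continuous_surjective_of_compact K
  have hcc : ∀ x : E, Continuous fun ω => ((c ω : K) : WeakDual ℝ E) x := fun x =>
    (WeakDual.eval_continuous x).comp (continuous_subtype_val.comp hc)
  refine ⟨⟨⟨⟨fun x => ⟨fun ω => ((c ω : K) : WeakDual ℝ E) x, hcc x⟩, ?_⟩, ?_⟩, ?_⟩⟩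
  · intro x y; ext ω; simp
  · intro r x; ext ω; simp
  · intro x
    apply le_antisymm
    · refine (ContinuousMap.norm_le _ (norm_nonneg _)).2 fun ω => ?_
      have h := (c ω).2
      have h : ‖WeakDual.toStrongDual (c ω : WeakDual ℝ E)‖ ≤ 1 := mem_closedBall_zero_iff.1 h
      calc _ ≤ ‖WeakDual.toStrongDual (c ω : WeakDual ℝ E)‖ * ‖x‖ :=
            (WeakDual.toStrongDual (c ω : WeakDual ℝ E)).le_opNorm x
        _ ≤ 1 * ‖x‖ := by gcongr
        _ = _ := one_mul _
    · obtain ⟨y, hy, hyx⟩ := exists_dual_vector'' ℝ x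
      obtain ⟨ω, hω⟩ := hcs ⟨StrongDual.toWeakDual y, by simpa [K] using hy⟩
      have := ContinuousMap.norm_coe_le_norm (⟨fun ω => ((c ω : K) : WeakDual ℝ E) x, hcc x⟩ : C(ℕ → Bool, ℝ)) ω
      simp only [ContinuousMap.coe_mk, hω] at this
      refine le_trans ?_ this
      change _ ≤ ‖y x‖
      rw [hyx]; simp

/-- sign of a boolean -/
noncomputable def bsg (b : Bool) : ℝ := if b = true then 1 else -1

theorem abs_bsg (b : Bool) : |bsg b| = 1 := by cases b <;> simp [bsg]

section univ
variable {G : Type*} [NormedAddCommGroup G] [NormedSpace ℝ G]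

/-- the function `ω ↦ ± v` -/
noncomputable def sv (p : ℕ) (v : G) : C(ℕ → Bool, G) :=
  ⟨fun ω => bsg (ω p) • v,
    ((continuous_of_discreteTopology (f := bsg)).comp (continuous_apply p)).smul continuous_const⟩

theorem sv_apply (p : ℕ) (v : G) (ω : ℕ → Bool) : sv p v ω = bsg (ω p) • v := rfl

theorem norm_sv_le (p : ℕ) (v : G) : ‖sv p v‖ ≤ ‖v‖ := by
  refine (ContinuousMap.norm_le _ (norm_nonneg _)).2 fun ω => ?_
  rw [sv_apply, norm_smul, Real.norm_eq_abs, abs_bsg, one_mul]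

theorem sv_sub (p : ℕ) (v w : G) : sv p (v - w) = sv p v - sv p w := by
  ext ω; simp [sv_apply, smul_sub]

open Classical in
/-- flip signs off `S` -/
noncomputable def flipOff (S : Set ℕ) (ω : ℕ → Bool) : ℕ → Bool :=
  fun n => if n ∈ S then ω n else !(ω n)

theorem continuous_flipOff (S : Set ℕ) : Continuous (flipOff S) := by
  refine continuous_pi fun n => ?_
  unfold flipOff
  by_cases h : n ∈ S
  · simpa [h] using continuous_apply n
  · simp only [h, if_false]
    exact (continuous_of_discreteTopology (f := not)).comp (continuous_apply n)

theorem bsg_flip (S : Set ℕ) (ω : ℕ → Bool) (n : ℕ) [Decidable (n ∈ S)] :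
    bsg (flipOff S ω n) = if n ∈ S then bsg (ω n) else - bsg (ω n) := by
  unfold flipOff
  by_cases h : n ∈ S
  · simp [h]
  · cases ω n <;> simp [h, bsg]

/-- conditional projection at base point -/
noncomputable def Rop (S : Set ℕ) : C(ℕ → Bool, G) →L[ℝ] G :=
  (1 / 2 : ℝ) • (ContinuousMap.evalCLM ℝ (fun _ => true) +
    ContinuousMap.evalCLM ℝ (flipOff S fun _ => true))

theorem Rop_apply (S : Set ℕ) (h : C(ℕ → Bool, G)) :
    Rop S h = (1 / 2 : ℝ) • (h (fun _ => true) + h (flipOff S fun _ => true)) := rfl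

open Classical in
theorem Rop_sv (S : Set ℕ) (p : ℕ) (v : G) : Rop S (sv p v) = if p ∈ S then v else 0 := by
  rw [Rop_apply, sv_apply, sv_apply, bsg_flip]
  split_ifs
  · simp [bsg, ← two_smul ℝ v, smul_smul]
  · simp

theorem norm_Rop_le (S : Set ℕ) (h : C(ℕ → Bool, G)) : ‖Rop S h‖ ≤ ‖h‖ := by
  rw [Rop_apply, norm_smul]
  have h1 := h.norm_coe_le_norm (fun _ => true)
  have h2 := h.norm_coe_le_norm (flipOff S fun _ => true)
  have h3 := norm_add_le (h (fun _ => true)) (h (flipOff S fun _ => true))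
  rw [Real.norm_of_nonneg (by norm_num)]
  linarith

/-- coordinate functionals -/
noncomputable def cf (φ : ℕ → G →L[ℝ] ℝ) (p : ℕ) : C(ℕ → Bool, G) →L[ℝ] ℝ :=
  (φ p).comp (Rop {p})

theorem cf_sv (φ : ℕ → G →L[ℝ] ℝ) (p q : ℕ) (v : G) :
    cf φ p (sv q v) = if p = q then φ p v else 0 := by
  simp only [cf, ContinuousLinearMap.comp_apply, Rop_sv, Set.mem_singleton_iff]
  by_cases h : p = q
  · simp [h]
  · simp [h, Ne.symm h]

theorem norm_cf_le (φ : ℕ → G →L[ℝ] ℝ) (p : ℕ) : ‖cf φ p‖ ≤ ‖φ p‖ := by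
  refine ContinuousLinearMap.opNorm_le_bound _ (norm_nonneg _) fun h => ?_
  calc _ ≤ ‖φ p‖ * ‖Rop {p} h‖ := (φ p).le_opNorm _
    _ ≤ _ := by gcongr; exact norm_Rop_le _ _

theorem norm_Q_le (S : Set ℕ) (h : C(ℕ → Bool, G)) :
    ‖(1 / 2 : ℝ) • (h + h.comp ⟨flipOff S, continuous_flipOff S⟩)‖ ≤ ‖h‖ := by
  refine (ContinuousMap.norm_le _ (norm_nonneg _)).2 fun ω => ?_
  have h1 := h.norm_coe_le_norm ω
  have h2 := h.norm_coe_le_norm (flipOff S ω)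
  have h3 := norm_add_le (h ω) (h (flipOff S ω))
  simp only [ContinuousMap.smul_apply, ContinuousMap.add_apply, ContinuousMap.comp_apply,
    ContinuousMap.coe_mk, norm_smul]
  rw [Real.norm_of_nonneg (by norm_num)]
  linarith

/-- The universal space. -/
noncomputable def Usp (g : ℕ → G) : Submodule ℝ C(ℕ → Bool, G) :=
  (Submodule.span ℝ (Set.range fun p => sv p (g p))).topologicalClosure

theorem sv_mem_Usp (g : ℕ → G) (p : ℕ) : sv p (g p) ∈ Usp g :=
  Submodule.le_topologicalClosure _ (Submodule.subset_span ⟨p, rfl⟩)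

theorem Usp_induction (g : ℕ → G) {H : Type*} [NormedAddCommGroup H] [NormedSpace ℝ H]
    (T : C(ℕ → Bool, G) →L[ℝ] H) (K : Submodule ℝ H) (hK : IsClosed (K : Set H))
    (hT : ∀ p, T (sv p (g p)) ∈ K) : ∀ z ∈ Usp g, T z ∈ K := by
  have hcl : IsClosed ((K.comap (T : C(ℕ → Bool, G) →ₗ[ℝ] H)) : Set C(ℕ → Bool, G)) :=
    hK.preimage T.continuous
  have : Usp g ≤ K.comap (T : C(ℕ → Bool, G) →ₗ[ℝ] H) := by
    refine Submodule.topologicalClosure_minimal _ ?_ hcl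
    rw [Submodule.span_le]
    rintro _ ⟨p, rfl⟩
    exact hT p
  exact fun z hz => this hz

theorem Usp_hasSum (g : ℕ → G) (φ : ℕ → G →L[ℝ] ℝ) (hφ : ∀ p, φ p (g p) = 1)
    (z : C(ℕ → Bool, G)) (hz : z ∈ Usp g) : HasSum (fun p => cf φ p z • sv p (g p)) z := by
  classical
  let PF : Finset ℕ → C(ℕ → Bool, G) →L[ℝ] C(ℕ → Bool, G) := fun F =>
    ∑ p ∈ F, (cf φ p).smulRight (sv p (g p))
  have hPF : ∀ F z, PF F z = ∑ p ∈ F, cf φ p z • sv p (g p) := fun F z => by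
    simp [PF]
  have hPFe : ∀ F p, PF F (sv p (g p)) = if p ∈ F then sv p (g p) else 0 := fun F p => by
    simp only [hPF, cf_sv, ite_smul, zero_smul]
    rw [Finset.sum_ite_eq' F p]
    simp [hφ]
  let QF : Finset ℕ → C(ℕ → Bool, G) →L[ℝ] C(ℕ → Bool, G) := fun F =>
    LinearMap.mkContinuous
      { toFun := fun h => (1 / 2 : ℝ) • (h + h.comp ⟨flipOff F, continuous_flipOff F⟩)
        map_add' := fun x y => by
          ext ω; simp only [ContinuousMap.smul_apply, ContinuousMap.add_apply, ContinuousMap.comp_apply, smul_add]; abel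
        map_smul' := fun r x => by
          ext ω; simp only [ContinuousMap.smul_apply, ContinuousMap.add_apply, ContinuousMap.comp_apply, smul_add, RingHom.id_apply, smul_comm r] } 1
      (fun h => by rw [one_mul]; exact norm_Q_le _ h)
  have hQF : ∀ F h ω, QF F h ω = (1 / 2 : ℝ) • (h ω + h (flipOff F ω)) := fun F h ω => rfl
  have hQFn : ∀ F h, ‖QF F h‖ ≤ ‖h‖ := fun F h => norm_Q_le _ h
  have hQFe : ∀ F p, QF F (sv p (g p)) = if p ∈ F then sv p (g p) else 0 := fun F p => by
    ext ω
    rw [hQF, sv_apply, sv_apply, bsg_flip]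
    by_cases h : p ∈ F
    · simp only [Finset.mem_coe, h, if_true, sv_apply]
      rw [← two_smul ℝ, smul_smul]; norm_num
    · simp [h]
  have hEq : ∀ F, ∀ w ∈ Usp g, PF F w = QF F w := by
    intro F w hw
    have := Usp_induction g (PF F - QF F) ⊥ (by simp) (by
      intro p; simp [hPFe, hQFe]) w hw
    simpa [sub_eq_zero] using this
  have hbd : ∀ F, ∀ w ∈ Usp g, ‖PF F w‖ ≤ ‖w‖ := fun F w hw => by
    rw [hEq F w hw]; exact hQFn F w
  have hspan : ∀ w ∈ Submodule.span ℝ (Set.range fun p => sv p (g p)),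
      ∀ᶠ F in (atTop : Filter (Finset ℕ)), PF F w = w := by
    intro w hw
    induction hw using Submodule.span_induction with
    | mem x hx =>
      obtain ⟨p, rfl⟩ := hx
      filter_upwards [eventually_ge_atTop {p}] with F hF
      rw [hPFe, if_pos (hF (by simp))]
    | zero => simp
    | add x y _ _ hx hy =>
      filter_upwards [hx, hy] with F h1 h2
      rw [map_add, h1, h2]
    | smul r x _ hx =>
      filter_upwards [hx] with F h1
      rw [map_smul, h1]
  unfold HasSum
  simp only [SummationFilter.unconditional_filter]
  rw [Metric.tendsto_nhds]
  intro ε hε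
  have hz' : z ∈ closure (Submodule.span ℝ (Set.range fun p => sv p (g p)) : Set C(ℕ → Bool, G)) := hz
  obtain ⟨w, hw, hwz⟩ := Metric.mem_closure_iff.1 hz' (ε / 2) (by positivity)
  filter_upwards [hspan w hw] with F hF
  rw [← hPF, dist_eq_norm]
  have hwU : w ∈ Usp g := Submodule.le_topologicalClosure _ hw
  have h1 := hbd F (z - w) (sub_mem hz hwU)
  have h2 : PF F z - z = PF F (z - w) - (z - w) := by rw [map_sub, hF]; abel
  rw [h2]
  rw [dist_eq_norm] at hwz
  calc _ ≤ _ := norm_sub_le _ _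
    _ < ε := by linarith

end univ

set_option maxHeartbeats 2000000 in
theorem embed_aux {E G : Type*} [NormedAddCommGroup E] [NormedSpace ℝ E] [CompleteSpace E]
    [SeparableSpace E] [NormedAddCommGroup G] [NormedSpace ℝ G] [CompleteSpace G]
    (hE : WeaklySequentiallyComplete E) (J : E →ₗᵢ[ℝ] G)
    (g : ℕ → G) (φ : ℕ → G →L[ℝ] ℝ) (hφ : ∀ p, φ p (g p) = 1) (hφn : ∀ p, ‖φ p‖ ≤ ‖g p‖⁻¹)
    (hg : ∀ (v : G) (δ : ℝ), 0 < δ → ∀ n : ℕ, ∃ p, (Nat.unpair p).2 = n ∧ ‖v - g p‖ < δ)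
    (a : ℕ → E) (b : ℕ → E →L[ℝ] ℝ) (ha : ∀ n, a n ≠ 0)
    (hab : ∀ x : E, Tendsto (fun n => ∑ j ∈ Finset.range n, b j x • a j) atTop (𝓝 x))
    (hbs : ∀ (x : E) (y : E →L[ℝ] ℝ), Summable fun n => |y (b n x • a n)|) :
    ∃ (T : E →L[ℝ] Usp g) (S : Usp g →L[ℝ] E), ∀ x, S (T x) = x := by
  classical
  have hapos : ∀ n, 0 < ‖a n‖ := fun n => norm_pos_iff.2 (ha n)
  let δ : ℕ → ℝ := fun n => ‖a n‖ * (1 / 2) ^ (n + 1) / (1 + ‖a n‖ * ‖b n‖)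
  have hδpos : ∀ n, 0 < δ n := fun n => by
    have := hapos n
    positivity
  have hδ1 : ∀ n, δ n ≤ ‖a n‖ * (1 / 2) ^ (n + 1) := fun n => by
    refine div_le_self (by positivity) ?_
    have : 0 ≤ ‖a n‖ * ‖b n‖ := by positivity
    linarith
  have hδ2 : ∀ n, δ n * ‖b n‖ ≤ (1 / 2) ^ (n + 1) := fun n => by
    have h0 : 0 ≤ ‖a n‖ * ‖b n‖ := by positivity
    have : δ n * ‖b n‖ = (1 / 2) ^ (n + 1) * ((‖a n‖ * ‖b n‖) / (1 + ‖a n‖ * ‖b n‖)) := by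
      simp only [δ]; ring
    rw [this]
    refine mul_le_of_le_one_right (by positivity) ?_
    rw [div_le_one (by positivity)]
    linarith
  have hgeo : Summable fun n : ℕ => (1 / 2 : ℝ) ^ (n + 1) :=
    (summable_nat_add_iff 1).2 summable_geometric_two
  choose k hk1 hk2 using fun n => hg (J (a n)) (δ n) (hδpos n) n
  have hkinj : Function.Injective k := fun m n h => by rw [← hk1 m, ← hk1 n, h]
  -- summability of the images
  have hsumm : ∀ x, Summable fun n => b n x • sv (k n) (g (k n)) := by
    intro x
    have h1 : Summable fun n => b n x • sv (k n) (J (a n) - g (k n)) := by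
      refine Summable.of_norm_bounded (hgeo.mul_right ‖x‖) fun n => ?_
      rw [norm_smul]
      calc ‖b n x‖ * ‖sv (k n) (J (a n) - g (k n))‖ ≤ (‖b n‖ * ‖x‖) * δ n := by
            gcongr
            · exact (b n).le_opNorm x
            · exact (norm_sv_le _ _).trans (hk2 n).le
        _ = (δ n * ‖b n‖) * ‖x‖ := by ring
        _ ≤ _ := by gcongr; exact hδ2 n
    have h2 : Summable fun n => b n x • sv (k n) (J (a n)) := by
      rw [summable_iff_vanishing_norm]
      intro ε hε
      obtain ⟨s, hs⟩ := orlicz_pettis_aux hE (fun n => b n x • a n) (hbs x) (ε / 3) (by positivity)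
      refine ⟨s, fun t ht => ?_⟩
      refine lt_of_le_of_lt ((ContinuousMap.norm_le (C := 2 * (ε / 3)) _ (by positivity)).2
        fun ω => ?_) (by linarith)
      have e1 : (∑ i ∈ t, b i x • sv (k i) (J (a i))) ω =
          J (∑ i ∈ t.filter (fun i => ω (k i) = true), b i x • a i -
            ∑ i ∈ t.filter (fun i => ¬ ω (k i) = true), b i x • a i) := by
        rw [ContinuousMap.sum_apply, Finset.sum_filter, Finset.sum_filter,
          ← Finset.sum_sub_distrib, map_sum]
        refine Finset.sum_congr rfl fun i _ => ?_
        rw [ContinuousMap.smul_apply, sv_apply]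
        by_cases h : ω (k i) = true <;> simp [h, bsg]
      rw [e1, J.norm_map]
      have f1 := hs (t.filter (fun i => ω (k i) = true))
        (Finset.disjoint_of_subset_left (Finset.filter_subset _ _) ht)
      have f2 := hs (t.filter (fun i => ¬ ω (k i) = true))
        (Finset.disjoint_of_subset_left (Finset.filter_subset _ _) ht)
      calc _ ≤ _ := norm_sub_le _ _
        _ ≤ _ := by linarith
    refine (h2.sub h1).congr fun n => ?_
    rw [sv_sub, smul_sub]; abel
  -- the embedding
  let Tn : ℕ → E →L[ℝ] C(ℕ → Bool, G) := fun N =>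
    ∑ n ∈ Finset.range N, (b n).smulRight (sv (k n) (g (k n)))
  have hTn : ∀ N x, Tn N x = ∑ n ∈ Finset.range N, b n x • sv (k n) (g (k n)) := fun N x => by
    simp [Tn]
  have hTlim : Tendsto (fun N x => Tn N x) atTop
      (𝓝 fun x => ∑' n, b n x • sv (k n) (g (k n))) := by
    rw [tendsto_pi_nhds]
    intro x
    simp_rw [hTn]
    exact (hsumm x).hasSum.tendsto_sum_nat
  let T0 : E →L[ℝ] C(ℕ → Bool, G) := continuousLinearMapOfTendsto Tn hTlim
  have hT0 : ∀ x, Tendsto (fun N => Tn N x) atTop (𝓝 (T0 x)) := fun x =>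
    (tendsto_pi_nhds.1 hTlim) x
  have hTnU : ∀ N x, Tn N x ∈ Usp g := fun N x => by
    rw [hTn]
    exact Submodule.sum_mem _ fun n _ => Submodule.smul_mem _ _ (sv_mem_Usp g _)
  have hT0U : ∀ x, T0 x ∈ Usp g := fun x =>
    (Submodule.isClosed_topologicalClosure _).mem_of_tendsto (hT0 x)
      (Eventually.of_forall fun N => hTnU N x)
  -- the left inverse
  have hDs : Summable fun n => (cf φ (k n)).smulRight (J (a n) - g (k n)) := by
    refine Summable.of_norm_bounded (hgeo.mul_left 2) fun n => ?_
    rw [ContinuousLinearMap.norm_smulRight_apply]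
    have h1 : ‖a n‖ / 2 ≤ ‖g (k n)‖ := by
      have h2 := hk2 n
      have h3 := hδ1 n
      have h4 : (1 / 2 : ℝ) ^ (n + 1) ≤ 1 / 2 := by
        rw [pow_succ]
        have : (1 / 2 : ℝ) ^ n ≤ 1 := pow_le_one₀ (by norm_num) (by norm_num)
        linarith
      have h5 : ‖J (a n)‖ ≤ ‖J (a n) - g (k n)‖ + ‖g (k n)‖ := by
        simpa using norm_add_le (J (a n) - g (k n)) (g (k n))
      rw [J.norm_map] at h5
      have h6 : ‖a n‖ * (1 / 2) ^ (n + 1) ≤ ‖a n‖ * (1 / 2) := by gcongr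
      linarith
    have hp := hapos n
    calc ‖cf φ (k n)‖ * ‖J (a n) - g (k n)‖
        ≤ (‖a n‖ / 2)⁻¹ * (‖a n‖ * (1 / 2) ^ (n + 1)) := by
          gcongr
          · exact (norm_cf_le _ _).trans ((hφn _).trans (inv_anti₀ (by positivity) h1))
          · exact (hk2 n).le.trans (hδ1 n)
      _ = _ := by field_simp
  let W : C(ℕ → Bool, G) →L[ℝ] G :=
    Rop (Set.range k) + ∑' n, (cf φ (k n)).smulRight (J (a n) - g (k n))
  have hD : ∀ z, HasSum (fun n => cf φ (k n) z • (J (a n) - g (k n)))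
      ((∑' n, (cf φ (k n)).smulRight (J (a n) - g (k n))) z) := fun z =>
    (ContinuousLinearMap.apply ℝ G z).hasSum hDs.hasSum
  have hWk : ∀ n, W (sv (k n) (g (k n))) = J (a n) := by
    intro n
    have h1 := hD (sv (k n) (g (k n)))
    have h2 := h1.unique (hasSum_single n (fun m hm => by
      rw [cf_sv, if_neg (fun h => hm (hkinj h)), zero_smul]))
    simp only [W, _root_.add_apply]
    rw [h2, cf_sv, if_pos rfl, hφ, one_smul, Rop_sv, if_pos ⟨n, rfl⟩]
    abel
  have hWo : ∀ p, p ∉ Set.range k → W (sv p (g p)) = 0 := by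
    intro p hp
    have h1 := hD (sv p (g p))
    have h2 := h1.unique (by
      convert hasSum_zero with m
      rw [cf_sv, if_neg (fun h => hp ⟨m, h⟩), zero_smul])
    simp only [W, _root_.add_apply]
    rw [h2, Rop_sv, if_neg hp, add_zero]
  have hJcl : IsClosed ((LinearMap.range J.toLinearMap : Submodule ℝ G) : Set G) := by
    have := J.isometry.isClosedEmbedding.isClosed_range
    have e : ((LinearMap.range J.toLinearMap : Submodule ℝ G) : Set G) = Set.range J := by
      ext z; rfl
    rw [e]
    exact this
  have hWr : ∀ z ∈ Usp g, W z ∈ LinearMap.range J.toLinearMap := by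
    refine Usp_induction g W _ hJcl fun p => ?_
    by_cases hp : p ∈ Set.range k
    · obtain ⟨n, rfl⟩ := hp
      rw [hWk]
      exact ⟨a n, rfl⟩
    · rw [hWo p hp]
      exact zero_mem _
  let W1 : Usp g →L[ℝ] LinearMap.range J.toLinearMap :=
    (W.comp (Usp g).subtypeL).codRestrict _ fun z => hWr z z.2
  let S : Usp g →L[ℝ] E :=
    (J.equivRange.symm : LinearMap.range J.toLinearMap →L[ℝ] E).comp W1
  have hJS : ∀ z : Usp g, J (S z) = W z := fun z => by
    have : J.equivRange (S z) = W1 z := J.equivRange.apply_symm_apply (W1 z)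
    have h := congrArg Subtype.val this
    exact h
  refine ⟨T0.codRestrict (Usp g) hT0U, S, fun x => J.injective ?_⟩
  rw [hJS]
  change W (T0 x) = J x
  have l1 := (W.continuous.tendsto _).comp (hT0 x)
  have l2 := (J.continuous.tendsto _).comp (hab x)
  refine tendsto_nhds_unique l1 (l2.congr fun N => ?_)
  simp only [Function.comp_apply, hTn, map_sum, map_smul, hWk]

/-- the ambient space -/
abbrev AmbG : Type u := ULift.{u} C(ℕ → Bool, ℝ)

theorem exists_good_seq (G : Type*) [NormedAddCommGroup G] [NormedSpace ℝ G]
    [SecondCountableTopology G] [Nontrivial G] : ∃ (g : ℕ → G) (φ : ℕ → G →L[ℝ] ℝ),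
    (∀ p, φ p (g p) = 1) ∧ (∀ p, ‖φ p‖ ≤ ‖g p‖⁻¹) ∧
    (∀ (v : G) (δ : ℝ), 0 < δ → ∀ n : ℕ, ∃ p, (Nat.unpair p).2 = n ∧ ‖v - g p‖ < δ) := by
  let X := {v : G // v ≠ 0}
  have : Nonempty X := by
    obtain ⟨v, hv⟩ := exists_ne (0 : G)
    exact ⟨⟨v, hv⟩⟩
  let d : ℕ → X := denseSeq X
  have hpos : ∀ n, ‖(d n : G)‖ ≠ 0 := fun n => norm_ne_zero_iff.2 (d n).2
  choose ψ hψ1 hψ2 using fun n => exists_dual_vector ℝ (d n : G) (hpos n)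
  refine ⟨fun p => d (Nat.unpair p).1, fun p => ‖(d (Nat.unpair p).1 : G)‖⁻¹ • ψ (Nat.unpair p).1,
    fun p => ?_, fun p => ?_, fun v δ hδ n => ?_⟩
  · simp only [_root_.smul_apply, hψ2, smul_eq_mul]
    exact inv_mul_cancel₀ (hpos _)
  · rw [norm_smul, hψ1, mul_one, norm_inv, norm_norm]
  · obtain ⟨w, hw, hw0⟩ : ∃ w : G, ‖v - w‖ < δ / 2 ∧ w ≠ 0 := by
      by_cases hv : v = 0
      · obtain ⟨w, hw⟩ := exists_ne (0 : G)
        have hwp : 0 < ‖w‖ := norm_pos_iff.2 hw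
        refine ⟨(δ / 4 * ‖w‖⁻¹) • w, ?_, smul_ne_zero (by positivity) hw⟩
        rw [hv, zero_sub, norm_neg, norm_smul, Real.norm_of_nonneg (by positivity), mul_assoc,
          inv_mul_cancel₀ hwp.ne']
        linarith
      · exact ⟨v, by simpa using hδ, hv⟩
    obtain ⟨m, hm⟩ := (denseRange_denseSeq X).exists_dist_lt ⟨w, hw0⟩ (ε := δ / 2) (by positivity)
    refine ⟨Nat.pair m n, by simp, ?_⟩
    rw [Subtype.dist_eq, dist_eq_norm] at hm
    simp only [Nat.unpair_pair]
    calc ‖v - (d m : G)‖ = ‖(v - w) + (w - (d m : G))‖ := by congr 1; abel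
      _ ≤ _ := norm_add_le _ _
      _ < δ := by
        have : ‖w - (d m : G)‖ < δ / 2 := hm
        linarith

/-- There exists a separable Banach space `U` with an unconditional Schauder basis such
that every weakly sequentially complete separable Banach space `E` with a besselian
Schauder frame is isomorphic, via a continuous linear isomorphism, to a closed
complemented subspace of `U`. -/
theorem exists_universal_space_for_besselianSchauderFrames :
    ∃ U : BanachSpace.{u}, TopologicalSpace.SeparableSpace U.X ∧
      HasUnconditionalSchauderBasis U.X ∧
      ∀ (E : Type u) [NormedAddCommGroup E] [NormedSpace ℝ E] [CompleteSpace E]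
        [TopologicalSpace.SeparableSpace E],
        WeaklySequentiallyComplete E →
        (∃ (a : ℕ → E) (b : ℕ → E →L[ℝ] ℝ), IsBesselianSchauderFrame a b) →
        ∃ F : Submodule ℝ U.X, IsClosed (F : Set U.X) ∧
          (∃ P : U.X →L[ℝ] U.X, (∀ z, P (P z) = P z) ∧
            LinearMap.range (P : U.X →ₗ[ℝ] U.X) = F) ∧
          Nonempty (E ≃L[ℝ] F) := by
  classical
  have hsep : SecondCountableTopology AmbG.{u} :=
    (Homeomorph.ulift (X := C(ℕ → Bool, ℝ))).secondCountableTopology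
  obtain ⟨g, φ, hφ, hφn, hg⟩ := exists_good_seq AmbG.{u}
  have hcl : IsClosed (Usp g : Set C(ℕ → Bool, AmbG.{u})) :=
    Submodule.isClosed_topologicalClosure _
  have : CompleteSpace (Usp g) := hcl.completeSpace_coe
  refine ⟨⟨Usp g⟩, ?_, ?_, ?_⟩
  · change SeparableSpace (Usp g)
    infer_instance
  · refine ⟨fun p => ⟨sv p (g p), sv_mem_Usp g p⟩, fun p => (cf φ p).comp (Usp g).subtypeL, ?_, ?_⟩
    · intro i j
      change cf φ i (sv j (g j)) = _
      rw [cf_sv]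
      by_cases h : i = j
      · subst h; simp [hφ]
      · simp [h]
    · intro z
      have h := Usp_hasSum g φ hφ (z : C(ℕ → Bool, AmbG.{u})) z.2
      have hind : Topology.IsInducing (Subtype.val : Usp g → C(ℕ → Bool, AmbG.{u})) :=
        Topology.IsInducing.subtypeVal
      refine (hind.hasSum_iff (g := (Usp g).subtype) _ _).1 ?_
      exact h
  · rintro E _ _ _ _ hE ⟨a, b, hab, A, -, hA⟩
    have main : ∃ (T : E →L[ℝ] Usp g) (S : Usp g →L[ℝ] E), ∀ x, S (T x) = x := by
      by_cases htriv : Subsingleton E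
      · exact ⟨0, 0, fun x => Subsingleton.elim _ _⟩
      · rw [not_subsingleton_iff_nontrivial] at htriv
        obtain ⟨v, hv⟩ := exists_ne (0 : E)
        obtain ⟨J⟩ := banach_mazur_cantor E
        have hprod : ∀ n x, (if a n = 0 then (0 : E →L[ℝ] ℝ) else b n) x •
            (if a n = 0 then v else a n) = b n x • a n := by
          intro n x
          by_cases h : a n = 0 <;> simp [h]
        refine embed_aux hE
          ((LinearIsometryEquiv.ulift ℝ C(ℕ → Bool, ℝ)).symm.toLinearIsometry.comp J)
          g φ hφ hφn hg (fun n => if a n = 0 then v else a n)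
          (fun n => if a n = 0 then 0 else b n) ?_ ?_ ?_
        · intro n
          by_cases h : a n = 0 <;> simp [h, hv]
        · intro x
          simp only [hprod]
          exact hab x
        · intro x y
          simp only [hprod]
          refine (hA x y).1.congr fun n => ?_
          rw [map_smul, smul_eq_mul, abs_mul]
    obtain ⟨T, S, hST⟩ := main
    refine ⟨LinearMap.range ((T.comp S : Usp g →L[ℝ] Usp g) : Usp g →ₗ[ℝ] Usp g), ?_,
      ⟨T.comp S, fun z => ?_, rfl⟩, ⟨?_⟩⟩
    · have : ((LinearMap.range ((T.comp S : Usp g →L[ℝ] Usp g) : Usp g →ₗ[ℝ] Usp g) :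
          Submodule ℝ (Usp g)) : Set (Usp g)) = {z | T (S z) = z} := by
        ext z
        constructor
        · rintro ⟨w, rfl⟩
          change T (S (T (S w))) = T (S w)
          rw [hST]
        · intro h
          exact ⟨z, h⟩
      rw [this]
      exact isClosed_eq (T.continuous.comp S.continuous) continuous_id
    · change T (S (T (S z))) = T (S z)
      rw [hST]
    · refine ContinuousLinearEquiv.equivOfInverse
        (T.codRestrict _ fun x => ⟨T x, ?_⟩) (S.comp (Submodule.subtypeL _)) ?_ ?_
      · change T (S (T x)) = T x
        rw [hST]
      · intro x
        exact hST x
      · rintro ⟨_, w, rfl⟩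
        apply Subtype.ext
        change T (S (T (S w))) = T (S w)
        rw [hST]
end
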